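/- arXiv:2402.17886 — 3 statements merged into one kernel-verified Lean document; each statement's English description precedes it below -/
import Mathlib

section
/- (Proposition B.1, KL decay along the OU process.) For every t > 0, KL(p_t ‖ γ^d) ≤ (1/2) · (e^{−4t}/(1 − e^{−2t})) · d + (1/2) e^{−2t} m₂². -/
open MeasureTheory Real
open scoped ENNReal RealInnerProductSpace

noncomputable section

/-- `ℝ^d` as a Euclidean space. -/
abbrev Euc (d : ℕ) := EuclideanSpace ℝ (Fin d)

/-- The standard Gaussian measure `γ^d` on `ℝ^d`. -/
def stdGaussian (d : ℕ) : Measure (Euc d) :=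
  volume.withDensity fun x => ENNReal.ofReal ((2 * π) ^ (-(d : ℝ) / 2) * exp (-‖x‖ ^ 2 / 2))

/-- The unnormalized measure with density `exp (-V)` with respect to Lebesgue measure. -/
def gibbs (d : ℕ) (V : Euc d → ℝ) : Measure (Euc d) :=
  volume.withDensity fun x => ENNReal.ofReal (exp (-V x))

/-- The time-`t` marginal `p_t` of the OU process `dX_t = -X_t dt + √2 dB_t` started at `p`,
i.e. the law of `e^{-t} X_0 + √(1-e^{-2t}) Z` with `X_0 ∼ p`, `Z ∼ γ^d` independent. -/
def ouMarginal (d : ℕ) (p : Measure (Euc d)) (t : ℝ) : Measure (Euc d) :=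
  (p.prod (stdGaussian d)).map fun xz =>
    exp (-t) • xz.1 + Real.sqrt (1 - exp (-2 * t)) • xz.2

/-- The (smooth, positive) density of `p_t`. -/
def ouDensity (d : ℕ) (p : Measure (Euc d)) (t : ℝ) (x : Euc d) : ℝ :=
  (2 * π * (1 - exp (-2 * t))) ^ (-(d : ℝ) / 2) *
    ∫ z, exp (-‖x - exp (-t) • z‖ ^ 2 / (2 * (1 - exp (-2 * t)))) ∂p

/-- The score `∇ ln p_t`. -/
def score (d : ℕ) (p : Measure (Euc d)) (t : ℝ) (x : Euc d) : Euc d :=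
  gradient (fun y => Real.log (ouDensity d p t y)) x

/-- The conditional law `p_{0|t}(·|x)` of `X_0` given `X_t = x`, with density (w.r.t. `p`)
proportional to `z ↦ exp (-‖x - e^{-t} z‖² / (2 (1 - e^{-2t})))`. -/
def posterior (d : ℕ) (p : Measure (Euc d)) (t : ℝ) (x : Euc d) : Measure (Euc d) :=
  ((p.withDensity fun z =>
      ENNReal.ofReal (exp (-‖x - exp (-t) • z‖ ^ 2 / (2 * (1 - exp (-2 * t)))))) Set.univ)⁻¹ •
    (p.withDensity fun z =>
      ENNReal.ofReal (exp (-‖x - exp (-t) • z‖ ^ 2 / (2 * (1 - exp (-2 * t))))))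

/-- Kullback–Leibler divergence `KL(μ ‖ ν) = ∫ log (dμ/dν) dμ`. -/
def KLdiv {α : Type*} [MeasurableSpace α] (μ ν : Measure α) : ℝ :=
  ∫ x, Real.log ((μ.rnDeriv ν x).toReal) ∂μ

/-- Mean of the posterior `p_{0|t}(·|x)`. -/
def postMean (d : ℕ) (p : Measure (Euc d)) (t : ℝ) (x : Euc d) : Euc d :=
  ∫ z, z ∂(posterior d p t x)

/-- Trace of the covariance matrix of the posterior `p_{0|t}(·|x)`. -/
def postTrCov (d : ℕ) (p : Measure (Euc d)) (t : ℝ) (x : Euc d) : ℝ :=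
  ∫ z, ‖z - postMean d p t x‖ ^ 2 ∂(posterior d p t x)

/-!
The joint law of `(X_0, X_t)` has an explicit density with respect to `p ⊗ γ^d`: at `(x, y)` it is
the likelihood ratio of `N(e^{-t} x, (1 - e^{-2t}) I)` against `γ^d` at `y`. The logarithm of this
ratio is quadratic, so its expectation, the divergence of the joint law from `p ⊗ γ^d`, is
`(s m₂² - d (log (1 - s) + s)) / 2` with `s = e^{-2t}`. Projecting to the second coordinate can only
decrease the divergence (data processing), and `-log (1 - s) - s ≤ s² / (1 - s)`.
-/

open InformationTheory Module

section KullbackLeibler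

variable {α β : Type*} [MeasurableSpace α] [MeasurableSpace β]

lemma KLdiv_le_of_klDiv_le_ofReal {μ ν : Measure α} [IsProbabilityMeasure μ]
    [IsProbabilityMeasure ν] {c : ℝ} (hc : 0 ≤ c) (h : klDiv μ ν ≤ ENNReal.ofReal c) :
    KLdiv μ ν ≤ c := by
  have hac : μ ≪ ν := (klDiv_ne_top_iff.mp (ne_top_of_le_ne_top ENNReal.ofReal_ne_top h)).1
  calc KLdiv μ ν = (klDiv μ ν).toReal := (toReal_klDiv_of_measure_eq hac (by simp)).symm
    _ ≤ c := ENNReal.toReal_le_of_le_ofReal hc h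

lemma llr_withDensity_ofReal {μ : Measure α} [SigmaFinite μ] {r : α → ℝ} (hr : Measurable r)
    (hr₀ : ∀ x, 0 ≤ r x) :
    llr (μ.withDensity fun x ↦ ENNReal.ofReal (r x)) μ
      =ᵐ[μ.withDensity fun x ↦ ENNReal.ofReal (r x)] fun x ↦ log (r x) := by
  filter_upwards [(withDensity_absolutelyContinuous μ _).ae_le
    (Measure.rnDeriv_withDensity μ hr.ennreal_ofReal)] with x hx
  rw [llr, hx, ENNReal.toReal_ofReal (hr₀ x)]

lemma klDiv_withDensity_ofReal {μ : Measure α} [IsProbabilityMeasure μ] {r : α → ℝ}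
    (hr : Measurable r) (hr₀ : ∀ x, 0 ≤ r x)
    [IsProbabilityMeasure (μ.withDensity fun x ↦ ENNReal.ofReal (r x))]
    (hint : Integrable (fun x ↦ log (r x)) (μ.withDensity fun x ↦ ENNReal.ofReal (r x))) :
    klDiv (μ.withDensity fun x ↦ ENNReal.ofReal (r x)) μ =
      ENNReal.ofReal (∫ x, log (r x) ∂(μ.withDensity fun x ↦ ENNReal.ofReal (r x))) := by
  have hllr := llr_withDensity_ofReal (μ := μ) hr hr₀
  rw [klDiv_of_ac_of_integrable (withDensity_absolutelyContinuous μ _)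
    ((integrable_congr hllr).mpr hint), integral_congr_ae hllr]
  simp

lemma map_prodMk_prod_eq_withDensity {μ : Measure α} {ν : Measure β} [SFinite ν]
    {f : α × β → β} {r : α × β → ℝ≥0∞} (hf : Measurable f) (hr : Measurable r)
    (h : ∀ x, ν.map (fun y ↦ f (x, y)) = ν.withDensity fun y ↦ r (x, y)) :
    (μ.prod ν).map (fun q ↦ (q.1, f q)) = (μ.prod ν).withDensity r := by
  refine Measure.ext_of_lintegral _ fun g hg ↦ ?_
  rw [lintegral_map hg (by fun_prop), lintegral_withDensity_eq_lintegral_mul _ hr hg,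
    lintegral_prod _ (by fun_prop), lintegral_prod _ (by fun_prop)]
  refine lintegral_congr fun x ↦ ?_
  calc ∫⁻ y, g (x, f (x, y)) ∂ν = ∫⁻ y, g (x, y) ∂(ν.map fun y ↦ f (x, y)) := by
        rw [lintegral_map (by fun_prop) (by fun_prop)]
    _ = ∫⁻ y, (r * g) (x, y) ∂ν := by
        rw [h, lintegral_withDensity_eq_lintegral_mul _ (by fun_prop) (by fun_prop)]
        rfl

lemma klDiv_map_prod_le_integral_log {μ : Measure α} {ν : Measure β} [IsProbabilityMeasure μ]
    [IsProbabilityMeasure ν] {f : α × β → β} {r : α × β → ℝ} (hf : Measurable f)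
    (hr : Measurable r) (hr₀ : ∀ q, 0 ≤ r q)
    (h : ∀ x, ν.map (fun y ↦ f (x, y)) = ν.withDensity fun y ↦ ENNReal.ofReal (r (x, y)))
    (hint : Integrable (fun q ↦ log (r (q.1, f q))) (μ.prod ν)) :
    klDiv ((μ.prod ν).map f) ν ≤ ENNReal.ofReal (∫ q, log (r (q.1, f q)) ∂(μ.prod ν)) := by
  have hF : Measurable fun q ↦ (q.1, f q) := by fun_prop
  have hlog : Measurable fun q ↦ log (r q) := hr.log
  have hjoint : (μ.prod ν).map (fun q ↦ (q.1, f q)) =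
      (μ.prod ν).withDensity fun q ↦ ENNReal.ofReal (r q) :=
    map_prodMk_prod_eq_withDensity hf hr.ennreal_ofReal h
  have : IsProbabilityMeasure ((μ.prod ν).withDensity fun q ↦ ENNReal.ofReal (r q)) :=
    hjoint ▸ Measure.isProbabilityMeasure_map hF.aemeasurable
  calc klDiv ((μ.prod ν).map f) ν
      = klDiv (((μ.prod ν).map fun q ↦ (q.1, f q)).map Prod.snd) ((μ.prod ν).map Prod.snd) := by
        rw [Measure.map_map measurable_snd hF, Measure.map_snd_prod, measure_univ, one_smul]
        rfl
    _ ≤ klDiv ((μ.prod ν).map fun q ↦ (q.1, f q)) (μ.prod ν) := klDiv_map_le _ _ measurable_snd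
    _ = ENNReal.ofReal (∫ q, log (r q) ∂((μ.prod ν).map fun q ↦ (q.1, f q))) := by
        rw [hjoint]
        refine klDiv_withDensity_ofReal hr hr₀ ?_
        rw [← hjoint]
        exact (integrable_map_measure hlog.aestronglyMeasurable hF.aemeasurable).mpr hint
    _ = ENNReal.ofReal (∫ q, log (r (q.1, f q)) ∂(μ.prod ν)) := by
        rw [integral_map hF.aemeasurable hlog.aestronglyMeasurable]

end KullbackLeibler

section Gaussian

variable {E : Type*} [NormedAddCommGroup E] [InnerProductSpace ℝ E]

/-- The (real-valued) density of the standard Gaussian measure with respect to Lebesgue measure. -/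
def stdGaussianPDF (x : E) : ℝ :=
  (2 * π) ^ (-(finrank ℝ E : ℝ) / 2) * exp (-‖x‖ ^ 2 / 2)

lemma stdGaussianPDF_nonneg (x : E) : 0 ≤ stdGaussianPDF x := by
  unfold stdGaussianPDF
  positivity

/-- The density of `N(m, σ² I)` with respect to the standard Gaussian measure. The absolute value
lets `σ` be any nonzero real; `σ = 0` gives a junk value. -/
def gaussianLikelihoodRatio (σ : ℝ) (m y : E) : ℝ :=
  |(σ ^ finrank ℝ E)⁻¹| * exp (‖y‖ ^ 2 / 2 - ‖σ⁻¹ • (y - m)‖ ^ 2 / 2)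

lemma gaussianLikelihoodRatio_nonneg (σ : ℝ) (m y : E) : 0 ≤ gaussianLikelihoodRatio σ m y := by
  unfold gaussianLikelihoodRatio
  positivity

lemma gaussianLikelihoodRatio_mul_stdGaussianPDF (σ : ℝ) (m y : E) :
    gaussianLikelihoodRatio σ m y * stdGaussianPDF y =
      |(σ ^ finrank ℝ E)⁻¹| * stdGaussianPDF (σ⁻¹ • (y - m)) := by
  have hexp : exp (-‖σ⁻¹ • (y - m)‖ ^ 2 / 2) =
      exp (‖y‖ ^ 2 / 2 - ‖σ⁻¹ • (y - m)‖ ^ 2 / 2) * exp (-‖y‖ ^ 2 / 2) := by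
    rw [← exp_add]
    ring_nf
  rw [gaussianLikelihoodRatio, stdGaussianPDF, stdGaussianPDF, hexp]
  ring

lemma log_gaussianLikelihoodRatio {σ : ℝ} (hσ : σ ≠ 0) (m z : E) :
    log (gaussianLikelihoodRatio σ m (m + σ • z)) =
      (‖m‖ ^ 2 + (σ ^ 2 - 1) * ‖z‖ ^ 2 + 2 * σ * ⟪m, z⟫ - finrank ℝ E * log (σ ^ 2)) / 2 := by
  have hlog : log |(σ ^ finrank ℝ E)⁻¹| = -(finrank ℝ E * log (σ ^ 2)) / 2 := by
    rw [log_abs, log_inv, log_pow, log_pow]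
    push_cast
    ring
  have hnorm : ‖m + σ • z‖ ^ 2 = ‖m‖ ^ 2 + 2 * σ * ⟪m, z⟫ + σ ^ 2 * ‖z‖ ^ 2 := by
    rw [norm_add_sq_real, inner_smul_right, norm_smul, mul_pow, norm_eq_abs, sq_abs]
    ring
  rw [gaussianLikelihoodRatio, add_sub_cancel_left, inv_smul_smul₀ hσ,
    log_mul (by positivity) (exp_pos _).ne', log_exp, hlog, hnorm]
  ring

variable [MeasurableSpace E] [BorelSpace E]

@[fun_prop]
lemma measurable_stdGaussianPDF : Measurable (stdGaussianPDF : E → ℝ) := by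
  unfold stdGaussianPDF
  fun_prop

variable [FiniteDimensional ℝ E]

@[fun_prop]
lemma measurable_gaussianLikelihoodRatio {α : Type*} [MeasurableSpace α] (σ : ℝ) {f g : α → E}
    (hf : Measurable f) (hg : Measurable g) :
    Measurable fun x ↦ gaussianLikelihoodRatio σ (f x) (g x) := by
  unfold gaussianLikelihoodRatio
  fun_prop

lemma integrable_stdGaussianPDF : Integrable (stdGaussianPDF : E → ℝ) := by
  have hexp : Integrable fun x : E ↦ exp (-(1 / 2) * ‖x‖ ^ 2) :=
    .of_integral_ne_zero <| by
      rw [GaussianFourier.integral_rexp_neg_mul_sq_norm (by norm_num)]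
      positivity
  refine (hexp.const_mul ((2 * π) ^ (-(finrank ℝ E : ℝ) / 2))).congr (.of_forall fun x ↦ ?_)
  simp only [stdGaussianPDF]
  ring_nf

theorem withDensity_stdGaussianPDF :
    volume.withDensity (fun x : E ↦ ENNReal.ofReal (stdGaussianPDF x)) =
      ProbabilityTheory.stdGaussian E := by
  have : IsFiniteMeasure (volume.withDensity fun x : E ↦ ENNReal.ofReal (stdGaussianPDF x)) :=
    isFiniteMeasure_withDensity_ofReal integrable_stdGaussianPDF.2
  refine Measure.ext_of_charFun (funext fun s ↦ ?_)
  have hintegrand (x : E) : (stdGaussianPDF x : ℂ) * Complex.exp (⟪x, s⟫ * Complex.I) =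
      ((2 * π : ℝ) : ℂ) ^ (-(finrank ℝ E : ℂ) / 2) *
        Complex.exp (-(1 / 2) * ‖x‖ ^ 2 + Complex.I * ⟪s, x⟫) := by
    rw [stdGaussianPDF, Complex.ofReal_mul, Complex.ofReal_cpow (by positivity),
      Complex.ofReal_exp, mul_assoc, ← Complex.exp_add, real_inner_comm]
    push_cast
    ring_nf
  have hconst : ((2 * π : ℝ) : ℂ) ^ (-(finrank ℝ E : ℂ) / 2) *
      (π / (1 / 2)) ^ (finrank ℝ E / 2 : ℂ) = 1 := by
    rw [show (π / (1 / 2) : ℂ) = ((2 * π : ℝ) : ℂ) by push_cast; ring,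
      ← Complex.cpow_add _ _ (by exact_mod_cast Real.two_pi_pos.ne')]
    simp [neg_div]
  rw [ProbabilityTheory.charFun_stdGaussian, charFun_apply,
    integral_withDensity_eq_integral_toReal_smul (by fun_prop) (by simp)]
  simp only [ENNReal.toReal_ofReal (stdGaussianPDF_nonneg _), Complex.real_smul, hintegrand]
  rw [integral_const_mul, GaussianFourier.integral_cexp_neg_mul_sq_norm_add (by norm_num),
    ← mul_assoc, hconst, one_mul, Complex.I_sq]
  ring_nf

lemma map_add_smul_withDensity (μ : Measure E) [μ.IsAddHaarMeasure] {σ : ℝ} (hσ : σ ≠ 0) (m : E)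
    {g : E → ℝ≥0∞} (hg : Measurable g) :
    (μ.withDensity g).map (fun z ↦ m + σ • z) =
      μ.withDensity fun y ↦ ENNReal.ofReal |(σ ^ finrank ℝ E)⁻¹| * g (σ⁻¹ • (y - m)) := by
  refine Measure.ext_of_lintegral _ fun h hh ↦ ?_
  rw [lintegral_map hh (by fun_prop), lintegral_withDensity_eq_lintegral_mul _ hg (by fun_prop),
    lintegral_withDensity_eq_lintegral_mul _ (by fun_prop) hh]
  calc ∫⁻ z, g z * h (m + σ • z) ∂μ
      = ∫⁻ y, g (σ⁻¹ • y) * h (m + y) ∂(μ.map (σ • ·)) := by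
        rw [lintegral_map (by fun_prop) (by fun_prop)]
        simp only [inv_smul_smul₀ hσ]
    _ = ENNReal.ofReal |(σ ^ finrank ℝ E)⁻¹| * ∫⁻ y, g (σ⁻¹ • y) * h (m + y) ∂μ := by
        rw [Measure.map_addHaar_smul _ hσ, lintegral_smul_measure, smul_eq_mul]
    _ = ENNReal.ofReal |(σ ^ finrank ℝ E)⁻¹| * ∫⁻ y, g (σ⁻¹ • (y - m)) * h y ∂μ := by
        rw [← lintegral_add_left_eq_self (fun y ↦ g (σ⁻¹ • (y - m)) * h y) m]
        simp only [add_sub_cancel_left]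
    _ = ∫⁻ y, ENNReal.ofReal |(σ ^ finrank ℝ E)⁻¹| * g (σ⁻¹ • (y - m)) * h y ∂μ := by
        rw [← lintegral_const_mul _ (by fun_prop)]
        simp only [mul_assoc]

theorem map_add_smul_stdGaussian {σ : ℝ} (hσ : σ ≠ 0) (m : E) :
    (ProbabilityTheory.stdGaussian E).map (fun z ↦ m + σ • z) =
      (ProbabilityTheory.stdGaussian E).withDensity
        fun y ↦ ENNReal.ofReal (gaussianLikelihoodRatio σ m y) := by
  rw [← withDensity_stdGaussianPDF, map_add_smul_withDensity _ hσ m (by fun_prop),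
    ← withDensity_mul _ (by fun_prop) (by fun_prop)]
  congr with y
  rw [Pi.mul_apply, ← ENNReal.ofReal_mul (abs_nonneg _),
    ← ENNReal.ofReal_mul (stdGaussianPDF_nonneg y), mul_comm (stdGaussianPDF y),
    gaussianLikelihoodRatio_mul_stdGaussianPDF]

lemma integral_norm_sq_stdGaussian :
    ∫ x, ‖x‖ ^ 2 ∂(ProbabilityTheory.stdGaussian E) = finrank ℝ E := by
  have hcoord (i : Fin (finrank ℝ E)) :
      ∫ x, ⟪stdOrthonormalBasis ℝ E i, x⟫ ^ 2 ∂(ProbabilityTheory.stdGaussian E) = 1 := by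
    have hvar := ProbabilityTheory.variance_dual_stdGaussian
      (innerSL ℝ (stdOrthonormalBasis ℝ E i))
    rw [ProbabilityTheory.variance_of_integral_eq_zero (by fun_prop)
      (ProbabilityTheory.integral_strongDual_stdGaussian _)] at hvar
    simpa using hvar
  have hint (i : Fin (finrank ℝ E)) : Integrable
      (fun x ↦ ⟪stdOrthonormalBasis ℝ E i, x⟫ ^ 2) (ProbabilityTheory.stdGaussian E) :=
    .of_integral_ne_zero (by simp [hcoord])
  simp_rw [← (stdOrthonormalBasis ℝ E).sum_sq_inner_right]
  rw [integral_finsetSum _ fun i _ ↦ hint i]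
  simp [hcoord]

lemma integrable_norm_sq_stdGaussian :
    Integrable (fun x ↦ ‖x‖ ^ 2) (ProbabilityTheory.stdGaussian E) :=
  ProbabilityTheory.IsGaussian.memLp_two_id.integrable_norm_pow two_ne_zero

lemma integrable_inner_prod {μ ν : Measure E} [IsFiniteMeasure μ] [IsFiniteMeasure ν]
    (hμ : Integrable (fun x ↦ ‖x‖ ^ 2) μ) (hν : Integrable (fun x ↦ ‖x‖ ^ 2) ν) :
    Integrable (fun q : E × E ↦ ⟪q.1, q.2⟫) (μ.prod ν) := by
  refine ((hμ.comp_fst ν).add (hν.comp_snd μ)).mono' (by fun_prop) (.of_forall fun q ↦ ?_)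
  calc ‖⟪q.1, q.2⟫‖ ≤ ‖q.1‖ * ‖q.2‖ := norm_inner_le_norm q.1 q.2
    _ ≤ ‖q.1‖ ^ 2 + ‖q.2‖ ^ 2 := by nlinarith [sq_nonneg (‖q.1‖ - ‖q.2‖)]

lemma integral_inner_prod_stdGaussian {p : Measure E} [IsFiniteMeasure p]
    (hp : Integrable (fun x ↦ ‖x‖ ^ 2) p) :
    ∫ q, ⟪q.1, q.2⟫ ∂(p.prod (ProbabilityTheory.stdGaussian E)) = 0 := by
  rw [integral_prod _ (integrable_inner_prod hp integrable_norm_sq_stdGaussian)]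
  have hzero (x : E) : ∫ z, ⟪x, z⟫ ∂(ProbabilityTheory.stdGaussian E) = 0 :=
    ProbabilityTheory.integral_strongDual_stdGaussian (innerSL ℝ x)
  simp [hzero]

variable {p : Measure E} [IsProbabilityMeasure p]

lemma integrable_and_integral_log_gaussianLikelihoodRatio
    (hp : Integrable (fun x ↦ ‖x‖ ^ 2) p) (a : ℝ) {σ : ℝ} (hσ : σ ≠ 0) :
    Integrable (fun q : E × E ↦ log (gaussianLikelihoodRatio σ (a • q.1) (a • q.1 + σ • q.2)))
        (p.prod (ProbabilityTheory.stdGaussian E)) ∧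
      ∫ q, log (gaussianLikelihoodRatio σ (a • q.1) (a • q.1 + σ • q.2))
        ∂(p.prod (ProbabilityTheory.stdGaussian E)) =
      (a ^ 2 * ∫ x, ‖x‖ ^ 2 ∂p + finrank ℝ E * (σ ^ 2 - 1 - log (σ ^ 2))) / 2 := by
  have hx := (hp.comp_fst (ProbabilityTheory.stdGaussian E)).const_mul (a ^ 2)
  have hz := ((integrable_norm_sq_stdGaussian (E := E)).comp_snd p).const_mul (σ ^ 2 - 1)
  have hxz := (integrable_inner_prod hp integrable_norm_sq_stdGaussian).const_mul (2 * σ * a)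
  have hlog (q : E × E) : log (gaussianLikelihoodRatio σ (a • q.1) (a • q.1 + σ • q.2)) =
      (a ^ 2 * ‖q.1‖ ^ 2 + (σ ^ 2 - 1) * ‖q.2‖ ^ 2 + 2 * σ * a * ⟪q.1, q.2⟫ -
        finrank ℝ E * log (σ ^ 2)) / 2 := by
    rw [log_gaussianLikelihoodRatio hσ, norm_smul, mul_pow, norm_eq_abs, sq_abs,
      real_inner_smul_left, ← mul_assoc]
  simp only [hlog]
  refine ⟨(((hx.fun_add hz).fun_add hxz).sub (integrable_const _)).div_const 2, ?_⟩
  rw [integral_div, integral_sub ((hx.fun_add hz).fun_add hxz) (integrable_const _),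
    integral_add (hx.fun_add hz) hxz, integral_add hx hz, integral_const_mul, integral_const_mul,
    integral_const_mul, integral_inner_prod_stdGaussian hp, integral_fun_fst (fun x ↦ ‖x‖ ^ 2),
    integral_fun_snd (fun x ↦ ‖x‖ ^ 2), integral_norm_sq_stdGaussian]
  simp only [integral_const, probReal_univ, smul_eq_mul]
  ring

theorem klDiv_map_smul_add_smul_stdGaussian_le (hp : Integrable (fun x ↦ ‖x‖ ^ 2) p) (a : ℝ)
    {σ : ℝ} (hσ : σ ≠ 0) :
    klDiv ((p.prod (ProbabilityTheory.stdGaussian E)).map fun q ↦ a • q.1 + σ • q.2)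
        (ProbabilityTheory.stdGaussian E) ≤
      ENNReal.ofReal
        ((a ^ 2 * ∫ x, ‖x‖ ^ 2 ∂p + finrank ℝ E * (σ ^ 2 - 1 - log (σ ^ 2))) / 2) := by
  obtain ⟨hint, hintegral⟩ := integrable_and_integral_log_gaussianLikelihoodRatio hp a hσ
  rw [← hintegral]
  exact klDiv_map_prod_le_integral_log (r := fun q ↦ gaussianLikelihoodRatio σ (a • q.1) q.2)
    (by fun_prop) (by fun_prop) (fun q ↦ gaussianLikelihoodRatio_nonneg σ _ _)
    (fun x ↦ map_add_smul_stdGaussian hσ (a • x)) hint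

end Gaussian

lemma neg_log_one_sub_sub_self_le_sq_div {s : ℝ} (hs : s < 1) :
    -log (1 - s) - s ≤ s ^ 2 / (1 - s) := by
  have hs' : 0 < 1 - s := sub_pos.mpr hs
  calc -log (1 - s) - s ≤ (1 - s)⁻¹ - 1 - s := by linarith [one_sub_inv_le_log_of_pos hs']
    _ = s ^ 2 / (1 - s) := by field

lemma stdGaussian_eq_probabilityTheory (d : ℕ) :
    stdGaussian d = ProbabilityTheory.stdGaussian (Euc d) := by
  rw [← withDensity_stdGaussianPDF, stdGaussian]
  simp only [stdGaussianPDF, finrank_euclideanSpace_fin]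

instance isProbabilityMeasure_stdGaussian (d : ℕ) : IsProbabilityMeasure (stdGaussian d) := by
  rw [stdGaussian_eq_probabilityTheory]
  infer_instance

instance isProbabilityMeasure_ouMarginal (d : ℕ) (p : Measure (Euc d)) [IsProbabilityMeasure p]
    (t : ℝ) : IsProbabilityMeasure (ouMarginal d p t) :=
  Measure.isProbabilityMeasure_map (by fun_prop)

lemma exp_neg_two_mul_lt_one {t : ℝ} (ht : 0 < t) : exp (-2 * t) < 1 := by
  rw [exp_lt_one_iff]
  linarith

theorem kl_decay_along_OU_general (d : ℕ) (p : Measure (Euc d)) [IsProbabilityMeasure p]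
    (hm2 : Integrable (fun x ↦ ‖x‖ ^ 2) p) {t : ℝ} (ht : 0 < t) :
    klDiv (ouMarginal d p t) (stdGaussian d) ≤
      ENNReal.ofReal (1 / 2 * (exp (-4 * t) / (1 - exp (-2 * t))) * d +
        1 / 2 * exp (-2 * t) * (∫ x, ‖x‖ ^ 2 ∂p)) := by
  set s := exp (-2 * t) with hs
  have hs1 : s < 1 := exp_neg_two_mul_lt_one ht
  have ha : exp (-t) ^ 2 = s := by rw [hs, ← exp_nat_mul]; ring_nf
  have hs4 : exp (-4 * t) = s ^ 2 := by rw [hs, ← exp_nat_mul]; ring_nf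
  have hσ : √(1 - s) ^ 2 = 1 - s := sq_sqrt (sub_pos.mpr hs1).le
  have hsmooth := klDiv_map_smul_add_smul_stdGaussian_le hm2 (exp (-t))
    (sqrt_pos.mpr (sub_pos.mpr hs1)).ne'
  rw [← stdGaussian_eq_probabilityTheory, ha, hσ, finrank_euclideanSpace_fin] at hsmooth
  refine hsmooth.trans (ENNReal.ofReal_le_ofReal ?_)
  rw [hs4]
  linarith [mul_le_mul_of_nonneg_left (neg_log_one_sub_sub_self_le_sq_div hs1) d.cast_nonneg]

/-- **Proposition B.1 (KL decay along the OU process).**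
For every `t > 0`, `KL(p_t ‖ γ^d) ≤ (1/2) (e^{-4t}/(1 - e^{-2t})) d + (1/2) e^{-2t} m₂²`. -/
theorem kl_decay_along_OU
    (d : ℕ) (hd : 1 ≤ d) (V : Euc d → ℝ) (hV : Measurable V)
    (p : Measure (Euc d)) (hprob : IsProbabilityMeasure p)
    (hp : p = ((gibbs d V) Set.univ)⁻¹ • gibbs d V)
    (hm2 : Integrable (fun x => ‖x‖ ^ 2) p)
    (t : ℝ) (ht : 0 < t) :
    KLdiv (ouMarginal d p t) (stdGaussian d) ≤
      1 / 2 * (exp (-4 * t) / (1 - exp (-2 * t))) * d +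
        1 / 2 * exp (-2 * t) * (∫ x, ‖x‖ ^ 2 ∂p) := by
  have hs : 0 < 1 - exp (-2 * t) := sub_pos.mpr (exp_neg_two_mul_lt_one ht)
  exact KLdiv_le_of_klDiv_le_ofReal (by positivity) (kl_decay_along_OU_general d p hm2 ht)
end
end

section
/- (Proposition B.2, stochastic-localization dynamics of the posterior covariance.) Assume p has finite second moment. The matrix-valued map t ↦ E_{x ∼ p_t}[Σ_t(x)] is differentiable on (0, ∞) and satisfies, for all t > 0, (d/dt) E_{x ∼ p_t}[Σ_t(x)] = (2 e^{−2t}/(1 − e^{−2t})²) E_{x ∼ p_t}[Σ_t(x)²]. -/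
open MeasureTheory Real
open scoped ENNReal RealInnerProductSpace

noncomputable section

/-- The covariance matrix `Σ_t(x)` of the posterior `p_{0|t}(·|x)`. -/
def postCov (d : ℕ) (p : Measure (Euc d)) (t : ℝ) (x : Euc d) : Matrix (Fin d) (Fin d) ℝ :=
  Matrix.of fun i j =>
    ∫ z, (z i - postMean d p t x i) * (z j - postMean d p t x j) ∂(posterior d p t x)

/-! With `y = e^t x` and `τ = e^{2t} - 1`, observing `X_t` amounts to observing `Y = X + √τ Z` with
`X ∼ p`, and the posterior covariance is the conditional covariance `C` of the noise `W = Y - X`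
given `Y`. Let `ρ` be the density of `Y` and `⟨W⟩` the conditional mean of `W`; then
`E[C] = τ I - ∫ ρ ⟨W⟩⟨W⟩ᵀ`, because `E[W Wᵀ] = τ I`. The heat equation turns `d/dτ` of
`ρ ⟨W⟩⟨W⟩ᵀ` into half its Laplacian in `y`, which integrates to zero, up to two corrections: the
dependence of `W` on `y` contributes `(2 / τ) ρ ⟨W⟩⟨W⟩ᵀ`, and the nonlinearity in the conditional
means contributes `-ρ ∑ₖ ∂ₖ⟨W⟩ (∂ₖ⟨W⟩)ᵀ`. As `∇⟨W⟩ = I - C / τ`, everything but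
`dE[C]/dτ = τ⁻² E[C²]` cancels, and the chain rule in `t` gives the theorem. -/

namespace GaussianChannel

open Module Function Set
open scoped ProbabilityTheory

section HeatKernel

variable {E : Type*} [NormedAddCommGroup E] [InnerProductSpace ℝ E]

/-- The Gaussian density of variance `τ` on `E`, with respect to Lebesgue measure. -/
def heatKernel (τ : ℝ) (w : E) : ℝ :=
  (2 * π * τ) ^ (-(finrank ℝ E : ℝ) / 2) * exp (-‖w‖ ^ 2 / (2 * τ))

/-- The logarithmic derivative of `heatKernel τ w` with respect to `τ`. -/
def heatRate (τ : ℝ) (w : E) : ℝ := ‖w‖ ^ 2 / (2 * τ ^ 2) - finrank ℝ E / (2 * τ)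

lemma heatKernel_pos {τ : ℝ} (hτ : 0 < τ) (w : E) : 0 < heatKernel τ w := by
  unfold heatKernel; positivity

@[fun_prop]
lemma continuous_heatKernel (τ : ℝ) : Continuous (heatKernel τ : E → ℝ) := by
  unfold heatKernel; fun_prop

lemma hasDerivAt_add_smul (w u : E) (s : ℝ) : HasDerivAt (fun s : ℝ => w + s • u) u s := by
  simpa using ((hasDerivAt_id s).smul_const u).const_add w

lemma hasDerivAt_heatKernel_line {τ : ℝ} (hτ : τ ≠ 0) (w u : E) (s : ℝ) :
    HasDerivAt (fun s : ℝ => heatKernel τ (w + s • u))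
      (-(⟪u, w + s • u⟫ / τ) * heatKernel τ (w + s • u)) s := by
  refine (((hasDerivAt_add_smul w u s).norm_sq.fun_neg.div_const (2 * τ)).exp.const_mul
    ((2 * π * τ) ^ (-(finrank ℝ E : ℝ) / 2))).congr_deriv ?_
  rw [heatKernel, real_inner_comm]
  field_simp

lemma hasDerivAt_heatKernel {τ : ℝ} (hτ : 0 < τ) (w : E) :
    HasDerivAt (fun τ => heatKernel τ w) (heatRate τ w * heatKernel τ w) τ := by
  have hpow : HasDerivAt (fun τ => (2 * π * τ) ^ (-(finrank ℝ E : ℝ) / 2))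
      (2 * π * (-(finrank ℝ E : ℝ) / 2) * (2 * π * τ) ^ (-(finrank ℝ E : ℝ) / 2 - 1)) τ := by
    simpa using ((hasDerivAt_id τ).const_mul (2 * π)).rpow_const
      (p := -(finrank ℝ E : ℝ) / 2) (Or.inl (by simp [hτ.ne', pi_ne_zero]))
  have hexp : HasDerivAt (fun τ => exp (-‖w‖ ^ 2 / (2 * τ)))
      (exp (-‖w‖ ^ 2 / (2 * τ)) * (‖w‖ ^ 2 / (2 * τ ^ 2))) τ := by
    refine ((((hasDerivAt_id τ).const_mul 2).fun_inv (by simpa using hτ.ne')).const_mul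
      (-‖w‖ ^ 2)).exp.congr_deriv ?_
    simp only [id, ← div_eq_mul_inv]
    field_simp
  refine (hpow.fun_mul hexp).congr_deriv ?_
  rw [heatRate, heatKernel, rpow_sub_one (by positivity)]
  field_simp
  ring

lemma abs_heatRate_le {a τ : ℝ} (ha : 0 < a) (hτ : a ≤ τ) (w : E) :
    |heatRate τ w| ≤ 1 / (2 * a ^ 2) * ‖w‖ ^ 2 + finrank ℝ E / (2 * a) := by
  have hτ0 : 0 < τ := ha.trans_le hτ
  have hnorm_le : ‖w‖ ^ 2 / (2 * τ ^ 2) ≤ 1 / (2 * a ^ 2) * ‖w‖ ^ 2 := by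
    rw [div_mul_eq_mul_div, one_mul]; gcongr
  have hfinrank_le : (finrank ℝ E : ℝ) / (2 * τ) ≤ finrank ℝ E / (2 * a) := by gcongr
  refine (abs_sub _ _).trans (add_le_add ?_ ?_) <;> rwa [abs_of_nonneg (by positivity)]

lemma heatKernel_one_eq {τ : ℝ} (hτ : 0 < τ) (z : E) :
    heatKernel 1 z = √τ ^ finrank ℝ E * heatKernel τ (√τ • z) := by
  have hpow : √τ ^ finrank ℝ E * τ ^ (-(finrank ℝ E : ℝ) / 2) = 1 := by
    rw [sqrt_eq_rpow, ← rpow_natCast, ← rpow_mul hτ.le, ← rpow_add hτ,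
      show 1 / 2 * (finrank ℝ E : ℝ) + -(finrank ℝ E : ℝ) / 2 = 0 by ring, rpow_zero]
  have hexp : -(τ * ‖z‖ ^ 2) / (2 * τ) = -‖z‖ ^ 2 / (2 * 1) := by field_simp
  rw [heatKernel, heatKernel, norm_smul, mul_pow, norm_eq_abs, sq_abs, sq_sqrt hτ.le, hexp,
    mul_rpow (x := 2 * π) (by positivity) hτ.le, mul_one]
  linear_combination -(2 * π) ^ (-(finrank ℝ E : ℝ) / 2) * exp (-‖z‖ ^ 2 / (2 * 1)) * hpow

lemma integrable_exp_neg_mul_norm_sq [FiniteDimensional ℝ E] [MeasurableSpace E] [BorelSpace E]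
    {c : ℝ} (hc : 0 < c) : Integrable fun w : E => exp (-(c * ‖w‖ ^ 2)) := by
  refine (GaussianFourier.integrable_cexp_neg_mul_sq_norm_add (b := (c : ℂ)) (V := E)
    (by simpa using hc) 0 0).norm.congr (.of_forall fun w => ?_)
  simp only [zero_mul, add_zero, Complex.norm_exp]
  norm_cast
  rw [neg_mul]

lemma integral_heatKernel [FiniteDimensional ℝ E] [MeasurableSpace E] [BorelSpace E]
    {τ : ℝ} (hτ : 0 < τ) : ∫ w : E, heatKernel τ w = 1 := by
  have hexp (w : E) : exp (-‖w‖ ^ 2 / (2 * τ)) = exp (-(1 / (2 * τ)) * ‖w‖ ^ 2) := by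
    congr 1; ring
  simp_rw [heatKernel, integral_const_mul, hexp]
  rw [GaussianFourier.integral_rexp_neg_mul_sq_norm (by positivity),
    show π / (1 / (2 * τ)) = 2 * π * τ by field_simp, ← rpow_add (by positivity), neg_div,
    neg_add_cancel, rpow_zero]

lemma exists_one_add_pow_mul_exp_neg_le {c : ℝ} (hc : 0 < c) (m : ℕ) :
    ∃ K, ∀ r, 0 ≤ r → (1 + r) ^ m * exp (-(c * r)) ≤ K := by
  refine ⟨m.factorial / c ^ m * exp c, fun r hr => ?_⟩
  have hpow_le := pow_div_factorial_le_exp (c * (1 + r)) (by positivity) m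
  rw [mul_pow, div_le_iff₀ (by positivity), mul_add, mul_one, exp_add] at hpow_le
  rw [exp_neg, ← div_eq_mul_inv, div_le_iff₀ (exp_pos _), div_mul_eq_mul_div, div_mul_eq_mul_div,
    le_div_iff₀ (by positivity)]
  linarith

lemma heatKernel_le {a b τ : ℝ} (ha : 0 < a) (hτ : τ ∈ Icc a b) (w : E) :
    heatKernel τ w ≤ (2 * π * a) ^ (-(finrank ℝ E : ℝ) / 2) *
      (exp (-(1 / (4 * b) * ‖w‖ ^ 2)) * exp (-(1 / (4 * b) * ‖w‖ ^ 2))) := by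
  have hτ0 : 0 < τ := ha.trans_le hτ.1
  rw [heatKernel, ← exp_add]
  refine mul_le_mul ?_ (exp_le_exp.2 ?_) (exp_pos _).le (by positivity)
  · exact rpow_le_rpow_of_nonpos (by positivity) (by gcongr; exact hτ.1)
      (div_nonpos_of_nonpos_of_nonneg (by simp) (by norm_num))
  · have : ‖w‖ ^ 2 / (2 * b) ≤ ‖w‖ ^ 2 / (2 * τ) := by gcongr; exact hτ.2
    calc -‖w‖ ^ 2 / (2 * τ) ≤ -(‖w‖ ^ 2 / (2 * b)) := by rw [neg_div]; linarith
      _ = -(1 / (4 * b) * ‖w‖ ^ 2) + -(1 / (4 * b) * ‖w‖ ^ 2) := by ring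

end HeatKernel

section Growth

variable {E : Type*} [NormedAddCommGroup E] [InnerProductSpace ℝ E]

lemma exists_abs_le_mul_one_add_norm_sq_pow {f : E → ℝ} (hf : f.HasTemperateGrowth) :
    ∃ (C : ℝ) (m : ℕ), 0 ≤ C ∧ ∀ w, |f w| ≤ C * (1 + ‖w‖ ^ 2) ^ m := by
  obtain ⟨m, C, hC, hle⟩ := hf.norm_iteratedFDeriv_le_uniform 0
  refine ⟨C * 2 ^ m, m, by positivity, fun w => ?_⟩
  have hf_le : |f w| ≤ C * (1 + ‖w‖) ^ m := by simpa using hle 0 le_rfl w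
  calc |f w| ≤ C * (1 + ‖w‖) ^ m := hf_le
    _ ≤ C * (2 * (1 + ‖w‖ ^ 2)) ^ m := by gcongr; nlinarith [sq_nonneg (‖w‖ - 1)]
    _ = C * 2 ^ m * (1 + ‖w‖ ^ 2) ^ m := by rw [mul_pow, mul_assoc]

lemma exists_abs_mul_heatKernel_le {f : E → ℝ} (hf : f.HasTemperateGrowth) {a b : ℝ}
    (ha : 0 < a) (hab : a ≤ b) :
    ∃ K, ∀ τ ∈ Icc a b, ∀ w,
      |f w * heatKernel τ w| ≤ K * exp (-(1 / (4 * b) * ‖w‖ ^ 2)) := by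
  have hb : 0 < b := ha.trans_le hab
  obtain ⟨C, m, hC, hf_le⟩ := exists_abs_le_mul_one_add_norm_sq_pow hf
  obtain ⟨K, hK_le⟩ := exists_one_add_pow_mul_exp_neg_le (c := 1 / (4 * b)) (by positivity) m
  set A := (2 * π * a) ^ (-(finrank ℝ E : ℝ) / 2)
  refine ⟨C * A * K, fun τ hτ w => ?_⟩
  set e := exp (-(1 / (4 * b) * ‖w‖ ^ 2))
  have hker := heatKernel_pos (ha.trans_le hτ.1) w
  calc |f w * heatKernel τ w| = |f w| * heatKernel τ w := by rw [abs_mul, abs_of_pos hker]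
    _ ≤ C * (1 + ‖w‖ ^ 2) ^ m * (A * (e * e)) := by
      gcongr
      exacts [hf_le w, heatKernel_le ha hτ w]
    _ = C * A * ((1 + ‖w‖ ^ 2) ^ m * e) * e := by ring
    _ ≤ C * A * K * e := by gcongr; exact hK_le _ (by positivity)

lemma exists_forall_abs_mul_heatKernel_le {f : E → ℝ} (hf : f.HasTemperateGrowth) {a b : ℝ}
    (ha : 0 < a) (hab : a ≤ b) : ∃ K, ∀ τ ∈ Icc a b, ∀ w, |f w * heatKernel τ w| ≤ K := by
  obtain ⟨K, hK⟩ := exists_abs_mul_heatKernel_le hf ha hab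
  have hK0 : 0 ≤ K := by simpa using (abs_nonneg _).trans (hK a ⟨le_rfl, hab⟩ 0)
  refine ⟨K, fun τ hτ w => (hK τ hτ w).trans (mul_le_of_le_one_right hK0 ?_)⟩
  have hb : 0 < b := ha.trans_le hab
  exact exp_le_one_iff.2 (neg_nonpos.2 (by positivity))

lemma hasTemperateGrowth_inner (v : E) : (fun w => ⟪v, w⟫).HasTemperateGrowth :=
  (innerSL ℝ v).hasTemperateGrowth

lemma hasTemperateGrowth_heatRate (τ : ℝ) : (heatRate τ : E → ℝ).HasTemperateGrowth := by
  unfold heatRate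
  simp only [div_eq_inv_mul]
  fun_prop

lemma hasTemperateGrowth_one_add_norm_sq_pow (m : ℕ) :
    (fun w : E => (1 + ‖w‖ ^ 2) ^ m).HasTemperateGrowth := by
  have := hasTemperateGrowth_norm_sq E
  fun_prop

lemma hasTemperateGrowth_fderiv_apply {f : E → ℝ} (hf : f.HasTemperateGrowth) (u : E) :
    (fun w => fderiv ℝ f w u).HasTemperateGrowth := by
  have hfderiv : (fderiv ℝ f).HasTemperateGrowth := by
    refine ⟨hf.1.fderiv_right (by simp), fun n => ?_⟩
    simpa only [norm_iteratedFDeriv_fderiv] using hf.2 (n + 1)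
  exact (ContinuousLinearMap.apply ℝ ℝ u).hasTemperateGrowth.comp hfderiv

/-- The first-order operator `f ↦ ∂ᵤf - ⟪u, ·⟫ f / τ`, which turns differentiation of
`f * heatKernel τ` into an operation on `f` alone. -/
def twistedDeriv (τ : ℝ) (u : E) (f : E → ℝ) (w : E) : ℝ :=
  fderiv ℝ f w u - ⟪u, w⟫ / τ * f w

lemma hasTemperateGrowth_twistedDeriv (τ : ℝ) (u : E) {f : E → ℝ} (hf : f.HasTemperateGrowth) :
    (twistedDeriv τ u f).HasTemperateGrowth := by
  have hu := hasTemperateGrowth_fderiv_apply hf u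
  unfold twistedDeriv
  simp only [div_eq_inv_mul]
  fun_prop

lemma hasDerivAt_mul_heatKernel_line {τ : ℝ} (hτ : τ ≠ 0) {f : E → ℝ} (hf : f.HasTemperateGrowth)
    (w u : E) (s : ℝ) :
    HasDerivAt (fun s : ℝ => f (w + s • u) * heatKernel τ (w + s • u))
      (twistedDeriv τ u f (w + s • u) * heatKernel τ (w + s • u)) s := by
  have hf_line : HasDerivAt (fun s : ℝ => f (w + s • u)) (fderiv ℝ f (w + s • u) u) s :=
    (hf.1.differentiable (by simp)).differentiableAt.hasFDerivAt.comp_hasDerivAt s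
      (hasDerivAt_add_smul w u s)
  refine (hf_line.fun_mul (hasDerivAt_heatKernel_line hτ w u s)).congr_deriv ?_
  rw [twistedDeriv]
  ring

end Growth

section Smoothing

variable {E : Type*} [NormedAddCommGroup E] [InnerProductSpace ℝ E] [MeasurableSpace E]

/-- The convolution of `p` with `f * heatKernel τ`, i.e. the unnormalized mean of `f (Y - X)` given
`Y = y`, where `X ∼ p` is observed through `Y = X + √τ Z` with independent Gaussian noise. -/
def smoothing (p : Measure E) (f : E → ℝ) (τ : ℝ) (y : E) : ℝ :=
  ∫ x, f (y - x) * heatKernel τ (y - x) ∂p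

variable [BorelSpace E] {p : Measure E} [IsFiniteMeasure p] {f : E → ℝ} {τ : ℝ}

lemma integrable_mul_heatKernel_sub (hf : f.HasTemperateGrowth) (hτ : 0 < τ) (y : E) :
    Integrable (fun x => f (y - x) * heatKernel τ (y - x)) p := by
  obtain ⟨K, hK⟩ := exists_forall_abs_mul_heatKernel_le hf hτ le_rfl
  have hf_cont := hf.1.continuous
  exact .of_bound (Continuous.aestronglyMeasurable (by fun_prop)) K
    (.of_forall fun x => hK τ ⟨le_rfl, le_rfl⟩ (y - x))

lemma hasDerivAt_smoothing_line (hτ : 0 < τ) (hf : f.HasTemperateGrowth) (y u : E) (s : ℝ) :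
    HasDerivAt (fun s : ℝ => smoothing p f τ (y + s • u))
      (smoothing p (twistedDeriv τ u f) τ (y + s • u)) s := by
  have hf' := hasTemperateGrowth_twistedDeriv τ u hf
  obtain ⟨K, hK⟩ := exists_forall_abs_mul_heatKernel_le hf' hτ le_rfl
  refine (hasDerivAt_integral_of_dominated_loc_of_deriv_le
    (F := fun s x => f (y + s • u - x) * heatKernel τ (y + s • u - x))
    (F' := fun s x => twistedDeriv τ u f (y + s • u - x) * heatKernel τ (y + s • u - x))
    (bound := fun _ => K) Filter.univ_mem
    (.of_forall fun r => (integrable_mul_heatKernel_sub hf hτ (y + r • u)).1)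
    (integrable_mul_heatKernel_sub hf hτ (y + s • u))
    (integrable_mul_heatKernel_sub hf' hτ (y + s • u)).1 (.of_forall fun x r _ => ?_)
    (integrable_const K) (.of_forall fun x r _ => ?_)).2
  · exact hK τ ⟨le_rfl, le_rfl⟩ (y + r • u - x)
  · simpa only [sub_add_eq_add_sub] using hasDerivAt_mul_heatKernel_line hτ.ne' hf (y - x) u r

lemma hasDerivAt_smoothing (hτ : 0 < τ) (hf : f.HasTemperateGrowth) (y : E) :
    HasDerivAt (fun τ => smoothing p f τ y)
      (smoothing p (heatRate τ * f) τ y) τ := by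
  set M : E → ℝ := fun w => 1 / (2 * (τ / 2) ^ 2) * ‖w‖ ^ 2 + finrank ℝ E / (2 * (τ / 2))
  have hdom : (fun w => M w * f w).HasTemperateGrowth := by
    have := hasTemperateGrowth_norm_sq E
    fun_prop
  obtain ⟨K, hK⟩ := exists_forall_abs_mul_heatKernel_le hdom (half_pos hτ)
    (by linarith : τ / 2 ≤ 2 * τ)
  refine (hasDerivAt_integral_of_dominated_loc_of_deriv_le
    (F := fun τ x => f (y - x) * heatKernel τ (y - x))
    (F' := fun τ x => heatRate τ (y - x) * f (y - x) * heatKernel τ (y - x)) (bound := fun _ => K)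
    (Icc_mem_nhds (half_lt_self hτ) (by linarith : τ < 2 * τ))
    ?_ (integrable_mul_heatKernel_sub hf hτ _)
    (integrable_mul_heatKernel_sub ((hasTemperateGrowth_heatRate τ).mul hf) hτ y).1
    (.of_forall fun x σ hσ => ?_) (integrable_const K) (.of_forall fun x σ hσ => ?_)).2
  · filter_upwards [Ioi_mem_nhds hτ] with σ hσ using (integrable_mul_heatKernel_sub hf hσ _).1
  · refine le_trans ?_ (hK σ hσ (y - x))
    simp only [norm_eq_abs, abs_mul]
    gcongr ?_ * _ * _
    exact (abs_heatRate_le (half_pos hτ) hσ.1 _).trans (le_abs_self _)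
  · refine ((hasDerivAt_heatKernel ((half_pos hτ).trans_le hσ.1) (y - x)).const_mul
      (f (y - x))).congr_deriv (by ring)

variable [FiniteDimensional ℝ E]

lemma measurable_smoothing (hf : Continuous f) :
    Measurable (smoothing p f τ) := by
  have hcont : Continuous fun z : E × E => f (z.1 - z.2) * heatKernel τ (z.1 - z.2) := by fun_prop
  exact hcont.stronglyMeasurable.integral_prod_right.measurable

lemma integrable_prod_sub {g : E → ℝ} (hg : Integrable g) :
    Integrable (fun z : E × E => g (z.1 - z.2)) (volume.prod p) := by
  simpa using (integrable_const (1 : ℝ)).convolution_integrand (.mul ℝ ℝ) (ν := p) hg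

end Smoothing

section NoiseLaw

variable {E : Type*} [NormedAddCommGroup E] [MeasurableSpace E]

/-- The conditional law of the noise `Y - X` given `Y = y`, where `Y = X + √τ Z`. -/
def noiseLaw (p : Measure E) (τ : ℝ) (y : E) : Measure E :=
  (p.tilted fun x => -‖y - x‖ ^ 2 / (2 * τ)).map (y - ·)

/-- The conditional mean of `f (Y - X)` given `Y = y`, where `Y = X + √τ Z`. -/
def noiseMean (p : Measure E) (f : E → ℝ) (τ : ℝ) (y : E) : ℝ := ∫ w, f w ∂noiseLaw p τ y

variable [BorelSpace E] {p : Measure E} {τ : ℝ}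

lemma isProbabilityMeasure_tilted_neg_norm_sub_sq [IsProbabilityMeasure p] (hτ : 0 ≤ τ) (y : E) :
    IsProbabilityMeasure (p.tilted fun x => -‖y - x‖ ^ 2 / (2 * τ)) := by
  refine isProbabilityMeasure_tilted (.of_bound
    (Continuous.aestronglyMeasurable (by fun_prop)) 1 (.of_forall fun x => ?_))
  rw [norm_eq_abs, abs_exp, exp_le_one_iff, neg_div]
  exact neg_nonpos.2 (by positivity)

lemma isProbabilityMeasure_noiseLaw [IsProbabilityMeasure p] (hτ : 0 ≤ τ) (y : E) :
    IsProbabilityMeasure (noiseLaw p τ y) :=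
  have := isProbabilityMeasure_tilted_neg_norm_sub_sq (p := p) hτ y
  Measure.isProbabilityMeasure_map (Continuous.aemeasurable (by fun_prop))

end NoiseLaw

section NoiseMean

variable {E : Type*} [NormedAddCommGroup E] [InnerProductSpace ℝ E] [MeasurableSpace E]

/-- The density of the observation `Y = X + √τ Z`, where `X ∼ p` and `Z` is standard Gaussian. -/
def density (p : Measure E) (τ : ℝ) (y : E) : ℝ := ∫ x, heatKernel τ (y - x) ∂p

/-- The derivative of `noiseMean p f τ` in the direction `u`. -/
def noiseMeanDeriv (p : Measure E) (u : E) (f : E → ℝ) (τ : ℝ) (y : E) : ℝ :=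
  noiseMean p (twistedDeriv τ u f) τ y -
    noiseMean p f τ y * noiseMean p (twistedDeriv τ u fun _ => 1) τ y

lemma smoothing_one (p : Measure E) (τ : ℝ) (y : E) :
    smoothing p (fun _ => 1) τ y = density p τ y := by
  simp only [smoothing, density, one_mul]

variable [BorelSpace E] {p : Measure E} {f g : E → ℝ} {τ : ℝ}

lemma noiseMean_eq_div (hτ : 0 < τ) (hf : Continuous f) (y : E) :
    noiseMean p f τ y = smoothing p f τ y / density p τ y := by
  rw [noiseMean, noiseLaw, integral_map (Continuous.aemeasurable (by fun_prop))
    (Continuous.aestronglyMeasurable hf), integral_tilted, smoothing, density, ← integral_div]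
  simp_rw [heatKernel, integral_const_mul, smul_eq_mul]
  congr with x
  field_simp

variable [IsProbabilityMeasure p]

lemma density_pos (hτ : 0 < τ) (y : E) : 0 < density p τ y := by
  have hint : Integrable (fun x => heatKernel τ (y - x)) p := by
    simpa only [one_mul] using integrable_mul_heatKernel_sub (p := p) (.const 1) hτ y
  refine (integral_pos_iff_support_of_nonneg (fun x => (heatKernel_pos hτ _).le) hint).2 ?_
  rw [show support (fun x => heatKernel τ (y - x)) = univ from
    eq_univ_of_forall fun x => (heatKernel_pos hτ (y - x)).ne', measure_univ]
  exact one_pos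

lemma density_mul_noiseMean (hτ : 0 < τ) (hf : Continuous f) (y : E) :
    density p τ y * noiseMean p f τ y = smoothing p f τ y := by
  rw [noiseMean_eq_div hτ hf, mul_div_cancel₀ _ (density_pos hτ y).ne']

lemma integrable_noiseLaw (hτ : 0 < τ) (hf : f.HasTemperateGrowth) (y : E) :
    Integrable f (noiseLaw p τ y) := by
  have hc : (2 * π * τ) ^ (-(finrank ℝ E : ℝ) / 2) ≠ 0 := by positivity
  have hexp : Integrable (fun x => exp (-‖y - x‖ ^ 2 / (2 * τ))) p := by
    simpa only [one_mul, heatKernel, integrable_const_mul_iff (IsUnit.mk0 _ hc)] using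
      integrable_mul_heatKernel_sub (p := p) (.const 1) hτ y
  rw [noiseLaw, integrable_map_measure hf.1.continuous.aestronglyMeasurable
    (Continuous.aemeasurable (by fun_prop)), integrable_tilted_iff hexp]
  refine ((integrable_mul_heatKernel_sub (p := p) hf hτ y).div_const
    ((2 * π * τ) ^ (-(finrank ℝ E : ℝ) / 2))).congr (.of_forall fun x => ?_)
  simp only [heatKernel, comp_apply, smul_eq_mul]
  field_simp

lemma memLp_two_noiseLaw (hτ : 0 < τ) (hf : f.HasTemperateGrowth) (y : E) :
    MemLp f 2 (noiseLaw p τ y) :=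
  (memLp_two_iff_integrable_sq hf.1.continuous.aestronglyMeasurable).2
    (integrable_noiseLaw hτ (hf.fun_pow 2) y)

lemma noiseMean_mono (hτ : 0 < τ) (hf : f.HasTemperateGrowth) (hg : g.HasTemperateGrowth)
    (h : f ≤ g) (y : E) : noiseMean p f τ y ≤ noiseMean p g τ y :=
  integral_mono (integrable_noiseLaw hτ hf y) (integrable_noiseLaw hτ hg y) h

lemma sq_noiseMean_le (hτ : 0 < τ) (hf : f.HasTemperateGrowth) (y : E) :
    noiseMean p f τ y ^ 2 ≤ noiseMean p (fun w => f w ^ 2) τ y := by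
  have := isProbabilityMeasure_noiseLaw (p := p) hτ.le y
  have hvar := ProbabilityTheory.variance_nonneg f (noiseLaw p τ y)
  rw [ProbabilityTheory.variance_eq_sub (memLp_two_noiseLaw hτ hf y)] at hvar
  exact sub_nonneg.1 hvar

lemma hasDerivAt_density_line (hτ : 0 < τ) (y u : E) (s : ℝ) :
    HasDerivAt (fun s : ℝ => density p τ (y + s • u))
      (smoothing p (twistedDeriv τ u fun _ => 1) τ (y + s • u)) s := by
  simpa only [smoothing_one] using hasDerivAt_smoothing_line (p := p) hτ (.const 1) y u s

lemma hasDerivAt_noiseMean_line (hτ : 0 < τ) (hf : f.HasTemperateGrowth) (y u : E) (s : ℝ) :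
    HasDerivAt (fun s : ℝ => noiseMean p f τ (y + s • u))
      (noiseMeanDeriv p u f τ (y + s • u)) s := by
  have hcont {h : E → ℝ} (hh : h.HasTemperateGrowth) : Continuous (twistedDeriv τ u h) :=
    (hasTemperateGrowth_twistedDeriv τ u hh).1.continuous
  have hdens : density p τ (y + s • u) ≠ 0 := (density_pos hτ _).ne'
  simp only [noiseMeanDeriv, noiseMean_eq_div hτ hf.1.continuous, noiseMean_eq_div hτ (hcont hf),
    noiseMean_eq_div hτ (hcont (.const 1))]
  refine ((hasDerivAt_smoothing_line hτ hf y u s).fun_div (hasDerivAt_density_line hτ y u s)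
    hdens).congr_deriv ?_
  field_simp

variable [FiniteDimensional ℝ E]

lemma measurable_density : Measurable (density p τ) := by
  rw [← funext (smoothing_one p τ)]
  exact measurable_smoothing continuous_const

lemma measurable_noiseMean (hτ : 0 < τ) (hf : Continuous f) : Measurable (noiseMean p f τ) := by
  simpa only [funext (noiseMean_eq_div hτ hf)] using!
    (measurable_smoothing hf).div measurable_density

end NoiseMean

section MomentBounded

variable {E : Type*} [NormedAddCommGroup E] [MeasurableSpace E]

/-- `F τ y` is measurable in `y` and dominated by a conditional moment of the noise, uniformly for
`τ ∈ [a, b]`. Products of conditional means are of this kind, and the weight `density p τ` makes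
them integrable uniformly in `τ`. -/
def MomentBounded (p : Measure E) (a b : ℝ) (F : ℝ → E → ℝ) : Prop :=
  (∀ τ ∈ Icc a b, Measurable (F τ)) ∧ ∃ (C : ℝ) (m : ℕ), 0 ≤ C ∧
    ∀ τ ∈ Icc a b, ∀ y, |F τ y| ≤ C * noiseMean p (fun w => (1 + ‖w‖ ^ 2) ^ m) τ y

variable {p : Measure E} {a b τ : ℝ} {F G : ℝ → E → ℝ}

lemma MomentBounded.neg (hF : MomentBounded p a b F) : MomentBounded p a b fun τ y => -F τ y := by
  obtain ⟨hF_meas, C, m, hC, hF_le⟩ := hF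
  exact ⟨fun τ hτ => (hF_meas τ hτ).neg, C, m, hC, fun τ hτ y => by simpa using hF_le τ hτ y⟩

variable [InnerProductSpace ℝ E] [BorelSpace E] [IsProbabilityMeasure p]

lemma noiseMean_one_add_norm_sq_pow_mono (hτ : 0 < τ) (y : E) :
    Monotone fun m : ℕ => noiseMean p (fun w => (1 + ‖w‖ ^ 2) ^ m) τ y := fun m n hmn =>
  noiseMean_mono hτ (hasTemperateGrowth_one_add_norm_sq_pow m)
    (hasTemperateGrowth_one_add_norm_sq_pow n)
    (fun w => pow_le_pow_right₀ (by nlinarith [sq_nonneg ‖w‖]) hmn) y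

lemma noiseMean_one_add_norm_sq_pow_mul_le (hτ : 0 < τ) (m n : ℕ) (y : E) :
    noiseMean p (fun w => (1 + ‖w‖ ^ 2) ^ m) τ y * noiseMean p (fun w => (1 + ‖w‖ ^ 2) ^ n) τ y ≤
      noiseMean p (fun w => (1 + ‖w‖ ^ 2) ^ ((m + n) * 2)) τ y := by
  have hmono := noiseMean_one_add_norm_sq_pow_mono (p := p) hτ y
  have hn : 0 ≤ noiseMean p (fun w => (1 + ‖w‖ ^ 2) ^ n) τ y :=
    integral_nonneg fun w => by positivity
  refine (mul_le_mul (hmono (Nat.le_add_right m n)) (hmono (Nat.le_add_left n m)) hn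
    (hn.trans (hmono (Nat.le_add_left n m)))).trans ?_
  simpa only [← sq, ← pow_mul] using
    sq_noiseMean_le (p := p) hτ (hasTemperateGrowth_one_add_norm_sq_pow (m + n)) y

lemma MomentBounded.mul (ha : 0 < a) (hF : MomentBounded p a b F) (hG : MomentBounded p a b G) :
    MomentBounded p a b fun τ y => F τ y * G τ y := by
  obtain ⟨hF_meas, C, m, hC, hF_le⟩ := hF
  obtain ⟨hG_meas, D, n, hD, hG_le⟩ := hG
  refine ⟨fun τ hτ => (hF_meas τ hτ).mul (hG_meas τ hτ), C * D, (m + n) * 2, by positivity,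
    fun τ hτ y => ?_⟩
  rw [abs_mul]
  refine (mul_le_mul (hF_le τ hτ y) (hG_le τ hτ y) (abs_nonneg _)
    ((abs_nonneg _).trans (hF_le τ hτ y))).trans ?_
  rw [mul_mul_mul_comm]
  gcongr
  exact noiseMean_one_add_norm_sq_pow_mul_le (ha.trans_le hτ.1) m n y

lemma MomentBounded.add (ha : 0 < a) (hF : MomentBounded p a b F) (hG : MomentBounded p a b G) :
    MomentBounded p a b fun τ y => F τ y + G τ y := by
  obtain ⟨hF_meas, C, m, hC, hF_le⟩ := hF
  obtain ⟨hG_meas, D, n, hD, hG_le⟩ := hG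
  refine ⟨fun τ hτ => (hF_meas τ hτ).add (hG_meas τ hτ), C + D, m + n, by positivity,
    fun τ hτ y => ?_⟩
  have hmono := noiseMean_one_add_norm_sq_pow_mono (p := p) (ha.trans_le hτ.1) y
  rw [add_mul]
  refine (abs_add_le _ _).trans (add_le_add ((hF_le τ hτ y).trans ?_) ((hG_le τ hτ y).trans ?_))
  · gcongr; exact hmono (Nat.le_add_right m n)
  · gcongr; exact hmono (Nat.le_add_left n m)

lemma MomentBounded.sub (ha : 0 < a) (hF : MomentBounded p a b F) (hG : MomentBounded p a b G) :
    MomentBounded p a b fun τ y => F τ y - G τ y := by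
  simpa only [sub_eq_add_neg] using hF.add ha hG.neg

variable [FiniteDimensional ℝ E]

lemma momentBounded_noiseMean_of_abs_le (ha : 0 < a) {f : ℝ → E → ℝ} {C : ℝ} {m : ℕ} (hC : 0 ≤ C)
    (hf : ∀ τ ∈ Icc a b, Continuous (f τ))
    (hf_le : ∀ τ ∈ Icc a b, ∀ w, |f τ w| ≤ C * (1 + ‖w‖ ^ 2) ^ m) :
    MomentBounded p a b fun τ => noiseMean p (f τ) τ := by
  refine ⟨fun τ hτ => measurable_noiseMean (ha.trans_le hτ.1) (hf τ hτ), C, m, hC,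
    fun τ hτ y => ?_⟩
  have hint := integrable_noiseLaw (p := p) (ha.trans_le hτ.1)
    (hasTemperateGrowth_one_add_norm_sq_pow m) y
  simp only [noiseMean, ← integral_const_mul]
  exact norm_integral_le_of_norm_le (f := f τ) (hint.const_mul C) (.of_forall (hf_le τ hτ))

lemma momentBounded_noiseMean (ha : 0 < a) {f : E → ℝ} (hf : f.HasTemperateGrowth) :
    MomentBounded p a b (noiseMean p f) := by
  obtain ⟨C, m, hC, hf_le⟩ := exists_abs_le_mul_one_add_norm_sq_pow hf
  exact momentBounded_noiseMean_of_abs_le ha hC (fun _ _ => hf.1.continuous) fun _ _ => hf_le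

lemma momentBounded_noiseMean_heatRate_mul (ha : 0 < a) {f : E → ℝ} (hf : f.HasTemperateGrowth) :
    MomentBounded p a b fun τ => noiseMean p (heatRate τ * f) τ := by
  have hM : (fun w =>
      (1 / (2 * a ^ 2) * ‖w‖ ^ 2 + finrank ℝ E / (2 * a)) * f w).HasTemperateGrowth := by
    have := hasTemperateGrowth_norm_sq E
    fun_prop
  obtain ⟨C, m, hC, hM_le⟩ := exists_abs_le_mul_one_add_norm_sq_pow hM
  refine momentBounded_noiseMean_of_abs_le (m := m) ha hC
    (fun τ _ => ((hasTemperateGrowth_heatRate τ).mul hf).1.continuous) fun τ hτ w => ?_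
  refine le_trans ?_ (hM_le w)
  rw [Pi.mul_apply, abs_mul, abs_mul]
  gcongr ?_ * _
  exact (abs_heatRate_le ha hτ.1 w).trans (le_abs_self _)

lemma MomentBounded.exists_integrable_bound (ha : 0 < a) (hab : a ≤ b)
    (hF : MomentBounded p a b F) :
    ∃ B : E → ℝ, Integrable B ∧ ∀ τ ∈ Icc a b, ∀ y, |density p τ y * F τ y| ≤ B y := by
  obtain ⟨-, C, m, hC, hF_le⟩ := hF
  have hq : (fun w : E => (1 + ‖w‖ ^ 2) ^ m).HasTemperateGrowth :=
    hasTemperateGrowth_one_add_norm_sq_pow m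
  obtain ⟨K, hK⟩ := exists_abs_mul_heatKernel_le hq ha hab
  have hb : 0 < b := ha.trans_le hab
  have hgauss : Integrable fun w : E => K * exp (-(1 / (4 * b) * ‖w‖ ^ 2)) :=
    (integrable_exp_neg_mul_norm_sq (by positivity)).const_mul K
  refine ⟨fun y => C * ∫ x, K * exp (-(1 / (4 * b) * ‖y - x‖ ^ 2)) ∂p,
    (integrable_prod_sub hgauss).integral_prod_left.const_mul C, fun τ hτ y => ?_⟩
  have hτ0 : 0 < τ := ha.trans_le hτ.1
  have hgauss_sub : Integrable (fun x => K * exp (-(1 / (4 * b) * ‖y - x‖ ^ 2))) p :=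
    (Integrable.of_bound (Continuous.aestronglyMeasurable (by fun_prop)) 1 (.of_forall fun x => by
      rw [norm_eq_abs, abs_exp, exp_le_one_iff, neg_nonpos]; positivity)).const_mul K
  calc |density p τ y * F τ y| = density p τ y * |F τ y| := by
        rw [abs_mul, abs_of_pos (density_pos hτ0 y)]
    _ ≤ density p τ y * (C * noiseMean p (fun w => (1 + ‖w‖ ^ 2) ^ m) τ y) := by
        gcongr
        exacts [(density_pos hτ0 y).le, hF_le τ hτ y]
    _ = C * smoothing p (fun w => (1 + ‖w‖ ^ 2) ^ m) τ y := by
        rw [mul_left_comm, density_mul_noiseMean hτ0 hq.1.continuous]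
    _ ≤ C * ∫ x, K * exp (-(1 / (4 * b) * ‖y - x‖ ^ 2)) ∂p :=
        mul_le_mul_of_nonneg_left (integral_mono (integrable_mul_heatKernel_sub hq hτ0 y) hgauss_sub
          fun x => (le_abs_self _).trans (hK τ hτ _)) hC

lemma MomentBounded.integrable (ha : 0 < a) (hF : MomentBounded p a b F) (hτ : τ ∈ Icc a b) :
    Integrable fun y => density p τ y * F τ y := by
  obtain ⟨B, hB, hF_le⟩ := hF.exists_integrable_bound ha (hτ.1.trans hτ.2)
  exact hB.mono' (measurable_density.mul (hF.1 τ hτ)).aestronglyMeasurable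
    (.of_forall (hF_le τ hτ))

end MomentBounded

section Divergence

variable {E : Type*} [NormedAddCommGroup E] [InnerProductSpace ℝ E] [MeasurableSpace E]
  [BorelSpace E] [FiniteDimensional ℝ E]

lemma integral_eq_zero_of_hasDerivAt_line {f f' : E → ℝ} {u : E} (hf : Integrable f)
    (hf' : Integrable f') (h : ∀ y, HasDerivAt (fun s : ℝ => f (y + s • u)) (f' y) 0) :
    ∫ y, f' y = 0 := by
  simpa using integral_bilinear_hasLineDerivAt_right_eq_neg_left_of_integrable
    (B := ContinuousLinearMap.mul ℝ ℝ) (f := fun _ => 1) (f' := fun _ => 0) (g := f) (g' := f')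
    (v := u) (μ := volume) (by simp) (by simpa using hf') (by simpa using hf)
    (fun y _ => by simpa [HasLineDerivAt] using hasDerivAt_const (0 : ℝ) (1 : ℝ)) (fun y _ => h y)

variable {p : Measure E} [IsProbabilityMeasure p] {f g : E → ℝ} {τ : ℝ}

lemma integral_density (hτ : 0 < τ) : ∫ y, density p τ y = 1 := by
  have hker : Integrable (heatKernel τ : E → ℝ) :=
    .of_integral_ne_zero (by rw [integral_heatKernel hτ]; exact one_ne_zero)
  simp only [density]
  rw [integral_integral_swap (integrable_prod_sub hker)]
  simp only [integral_sub_right_eq_self (heatKernel τ : E → ℝ), integral_heatKernel hτ,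
    integral_const, probReal_univ, smul_eq_mul, mul_one]

lemma integrable_smoothing (hτ : 0 < τ) (hf : f.HasTemperateGrowth) :
    Integrable (smoothing p f τ) := by
  simpa only [density_mul_noiseMean hτ hf.1.continuous] using
    (momentBounded_noiseMean (p := p) hτ hf).integrable hτ ⟨le_rfl, le_rfl⟩

lemma integrable_density (hτ : 0 < τ) : Integrable (density p τ) := by
  rw [← funext (smoothing_one p τ)]
  exact integrable_smoothing hτ (.const 1)

lemma integral_smoothing_twistedDeriv (hτ : 0 < τ) (hf : f.HasTemperateGrowth) (u : E) :
    ∫ y, smoothing p (twistedDeriv τ u f) τ y = 0 :=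
  integral_eq_zero_of_hasDerivAt_line (integrable_smoothing hτ hf)
    (integrable_smoothing hτ (hasTemperateGrowth_twistedDeriv τ u hf))
    fun y => by simpa using hasDerivAt_smoothing_line (p := p) hτ hf y u 0

end Divergence

section MeanProduct

lemma hasDerivAt_mul_div_mul_div {n a b : ℝ → ℝ} {n' a' b' s : ℝ} (hn : HasDerivAt n n' s)
    (ha : HasDerivAt a a' s) (hb : HasDerivAt b b' s) (hn0 : n s ≠ 0) :
    HasDerivAt (fun r => n r * (a r / n r * (b r / n r)))
      (n s * (a' / n s * (b s / n s) + a s / n s * (b' / n s) -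
        a s / n s * (b s / n s) * (n' / n s))) s := by
  refine (hn.fun_mul ((ha.fun_div hn hn0).fun_mul (hb.fun_div hn hn0))).congr_deriv ?_
  field_simp
  ring

variable {E : Type*} [NormedAddCommGroup E] [InnerProductSpace ℝ E] [MeasurableSpace E]

/-- The derivative of `density * ⟨f⟩ * ⟨g⟩` relative to `density`, for the conditional means `⟨·⟩`
of the noise and a differentiation which acts on all `f * heatKernel` through the operator `L`
on `f`. -/
def meanProductRate (p : Measure E) (L : (E → ℝ) → E → ℝ) (f g : E → ℝ) (τ : ℝ) (y : E) : ℝ :=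
  noiseMean p (L f) τ y * noiseMean p g τ y + noiseMean p f τ y * noiseMean p (L g) τ y -
    noiseMean p f τ y * noiseMean p g τ y * noiseMean p (L fun _ => 1) τ y

variable [BorelSpace E] {p : Measure E} [IsProbabilityMeasure p] {f g : E → ℝ} {τ : ℝ}

lemma hasDerivAt_density_mul_noiseMean_mul_line (hτ : 0 < τ) (hf : f.HasTemperateGrowth)
    (hg : g.HasTemperateGrowth) (y u : E) (s : ℝ) :
    HasDerivAt (fun s : ℝ => density p τ (y + s • u) *
        (noiseMean p f τ (y + s • u) * noiseMean p g τ (y + s • u)))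
      (density p τ (y + s • u) * meanProductRate p (twistedDeriv τ u) f g τ (y + s • u)) s := by
  have hcont {h : E → ℝ} (hh : h.HasTemperateGrowth) : Continuous (twistedDeriv τ u h) :=
    (hasTemperateGrowth_twistedDeriv τ u hh).1.continuous
  simp only [meanProductRate, noiseMean_eq_div hτ hf.1.continuous,
    noiseMean_eq_div hτ hg.1.continuous, noiseMean_eq_div hτ (hcont hf),
    noiseMean_eq_div hτ (hcont hg), noiseMean_eq_div hτ (hcont (.const 1))]
  exact hasDerivAt_mul_div_mul_div (hasDerivAt_density_line hτ y u s)
    (hasDerivAt_smoothing_line hτ hf y u s) (hasDerivAt_smoothing_line hτ hg y u s)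
    (density_pos hτ _).ne'

lemma hasDerivAt_density_mul_noiseMean_mul (hτ : 0 < τ) (hf : f.HasTemperateGrowth)
    (hg : g.HasTemperateGrowth) (y : E) :
    HasDerivAt (fun τ => density p τ y * (noiseMean p f τ y * noiseMean p g τ y))
      (density p τ y * meanProductRate p (heatRate τ * ·) f g τ y) τ := by
  have hcont {h : E → ℝ} (hh : h.HasTemperateGrowth) : Continuous (heatRate τ * h) :=
    ((hasTemperateGrowth_heatRate τ).mul hh).1.continuous
  have hone : HasDerivAt (fun τ => density p τ y)
      (smoothing p (heatRate τ * fun _ => 1) τ y) τ := by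
    simpa only [smoothing_one] using hasDerivAt_smoothing (p := p) hτ (.const 1) y
  have hrate := hasDerivAt_mul_div_mul_div hone (hasDerivAt_smoothing (p := p) hτ hf y)
    (hasDerivAt_smoothing (p := p) hτ hg y) (density_pos hτ y).ne'
  rw [meanProductRate, noiseMean_eq_div hτ hf.1.continuous,
    noiseMean_eq_div hτ hg.1.continuous, noiseMean_eq_div hτ (hcont hf),
    noiseMean_eq_div hτ (hcont hg), noiseMean_eq_div hτ (hcont (.const 1))]
  refine hrate.congr_of_eventuallyEq ?_
  filter_upwards [Ioi_mem_nhds hτ] with σ hσ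
  rw [noiseMean_eq_div hσ hf.1.continuous, noiseMean_eq_div hσ hg.1.continuous]

lemma hasDerivAt_density_mul_meanProductRate_line (hτ : 0 < τ) (hf : f.HasTemperateGrowth)
    (hg : g.HasTemperateGrowth) (y u : E) (s : ℝ) :
    HasDerivAt (fun s : ℝ => density p τ (y + s • u) *
        meanProductRate p (twistedDeriv τ u) f g τ (y + s • u))
      (density p τ (y + s • u) *
        (meanProductRate p (fun h => twistedDeriv τ u (twistedDeriv τ u h)) f g τ (y + s • u) +
          2 * (noiseMeanDeriv p u f τ (y + s • u) * noiseMeanDeriv p u g τ (y + s • u)))) s := by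
  have hf' := hasTemperateGrowth_twistedDeriv τ u hf
  have hg' := hasTemperateGrowth_twistedDeriv τ u hg
  have hone := hasDerivAt_noiseMean_line (p := p) hτ
    (hasTemperateGrowth_twistedDeriv τ u (.const (1 : ℝ))) y u s
  have hsum := ((hasDerivAt_density_mul_noiseMean_mul_line (p := p) hτ hf' hg y u s).fun_add
    (hasDerivAt_density_mul_noiseMean_mul_line (p := p) hτ hf hg' y u s)).fun_sub
    ((hasDerivAt_density_mul_noiseMean_mul_line (p := p) hτ hf hg y u s).fun_mul hone)
  refine (hsum.congr_deriv ?_).congr_of_eventuallyEq (.of_forall fun s => ?_) <;>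
    simp only [meanProductRate, noiseMeanDeriv] <;> ring

lemma MomentBounded.meanProductRate {a b : ℝ} [FiniteDimensional ℝ E] (ha : 0 < a)
    (hf : f.HasTemperateGrowth) (hg : g.HasTemperateGrowth) {L : ℝ → (E → ℝ) → E → ℝ}
    (hL : ∀ h : E → ℝ, h.HasTemperateGrowth → MomentBounded p a b fun τ => noiseMean p (L τ h) τ) :
    MomentBounded p a b fun τ => meanProductRate p (L τ) f g τ := by
  have hf_mean := momentBounded_noiseMean (p := p) (b := b) ha hf
  have hg_mean := momentBounded_noiseMean (p := p) (b := b) ha hg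
  exact (((hL f hf).mul ha hg_mean).add ha (hf_mean.mul ha (hL g hg))).sub ha
    ((hf_mean.mul ha hg_mean).mul ha (hL _ (.const 1)))

end MeanProduct

section TwistedLaplacian

variable {E : Type*} [NormedAddCommGroup E] [InnerProductSpace ℝ E] {ι : Type*} [Fintype ι]

lemma twistedDeriv_const (τ : ℝ) (u : E) (c : ℝ) :
    twistedDeriv τ u (fun _ => c) = fun w => ⟪u, w⟫ * (-c / τ) := by
  funext w
  rw [twistedDeriv, fderiv_const_apply, zero_apply]
  ring

lemma twistedDeriv_const_add (τ : ℝ) (u : E) (c : ℝ) (h : E → ℝ) :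
    twistedDeriv τ u (fun w => c + h w) =
      fun w => c * twistedDeriv τ u (fun _ => 1) w + twistedDeriv τ u h w := by
  funext w
  simp only [twistedDeriv, fderiv_const_add, fderiv_const_apply, zero_apply]
  ring

lemma twistedDeriv_inner_mul (τ : ℝ) (u v : E) {h : E → ℝ} (hh : Differentiable ℝ h) :
    twistedDeriv τ u (fun w => ⟪v, w⟫ * h w) =
      fun w => ⟪v, u⟫ * h w + ⟪v, w⟫ * twistedDeriv τ u h w := by
  funext w
  have hfderiv := ((innerSL ℝ v).hasFDerivAt (x := w)).fun_mul (hh w).hasFDerivAt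
  simp only [innerSL_apply_apply] at hfderiv
  simp only [twistedDeriv, hfderiv.fderiv, add_apply, smul_apply, innerSL_apply_apply, smul_eq_mul]
  ring

lemma twistedDeriv_inner (τ : ℝ) (u v : E) :
    twistedDeriv τ u (fun w => ⟪v, w⟫) =
      fun w => ⟪v, u⟫ + ⟪v, w⟫ * twistedDeriv τ u (fun _ => 1) w := by
  simpa only [mul_one] using twistedDeriv_inner_mul τ u v (h := fun _ => 1) (by fun_prop)

lemma twistedDeriv_twistedDeriv_one (τ : ℝ) (u : E) :
    twistedDeriv τ u (twistedDeriv τ u fun _ => 1) =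
      fun w => ⟪u, w⟫ ^ 2 / τ ^ 2 - ‖u‖ ^ 2 / τ := by
  rw [twistedDeriv_const, twistedDeriv_inner_mul τ u u (by fun_prop), twistedDeriv_const]
  funext w
  rw [real_inner_self_eq_norm_sq]
  ring

lemma twistedDeriv_twistedDeriv_inner (τ : ℝ) (u v : E) :
    twistedDeriv τ u (twistedDeriv τ u fun w => ⟪v, w⟫) = fun w =>
      ⟪v, w⟫ * twistedDeriv τ u (twistedDeriv τ u fun _ => 1) w - 2 / τ * (⟪u, w⟫ * ⟪v, u⟫) := by
  have hone : Differentiable ℝ (twistedDeriv τ u fun _ => 1) :=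
    (hasTemperateGrowth_twistedDeriv τ u (.const 1)).1.differentiable (by simp)
  rw [twistedDeriv_inner, twistedDeriv_const_add, twistedDeriv_inner_mul τ u v hone]
  funext w
  rw [twistedDeriv_const]
  ring

lemma sum_twistedDeriv_twistedDeriv_one (e : OrthonormalBasis ι ℝ E) (τ : ℝ) (w : E) :
    ∑ k, twistedDeriv τ (e k) (twistedDeriv τ (e k) fun _ => 1) w = 2 * heatRate τ w := by
  simp only [twistedDeriv_twistedDeriv_one, Finset.sum_sub_distrib, ← Finset.sum_div,
    e.sum_sq_inner_right, e.norm_eq_one, one_pow, Finset.sum_const, Finset.card_univ, nsmul_eq_mul,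
    mul_one, heatRate, finrank_eq_card_basis e.toBasis]
  ring

lemma sum_twistedDeriv_twistedDeriv_inner (e : OrthonormalBasis ι ℝ E) (τ : ℝ) (v w : E) :
    ∑ k, twistedDeriv τ (e k) (twistedDeriv τ (e k) fun w => ⟪v, w⟫) w =
      2 * (heatRate τ w * ⟪v, w⟫) - 2 / τ * ⟪v, w⟫ := by
  have hinner : ∑ k, ⟪e k, w⟫ * ⟪v, e k⟫ = ⟪v, w⟫ := by
    simpa only [mul_comm] using e.sum_inner_mul_inner v w
  simp only [twistedDeriv_twistedDeriv_inner, Finset.sum_sub_distrib, ← Finset.mul_sum, hinner,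
    sum_twistedDeriv_twistedDeriv_one]
  ring

variable [MeasurableSpace E] [BorelSpace E] {p : Measure E} [IsProbabilityMeasure p]
  {τ : ℝ}

lemma sum_noiseMean_twistedDeriv_twistedDeriv (hτ : 0 < τ) (e : OrthonormalBasis ι ℝ E)
    {f : E → ℝ} (hf : f.HasTemperateGrowth) (y : E) :
    ∑ k, noiseMean p (twistedDeriv τ (e k) (twistedDeriv τ (e k) f)) τ y =
      noiseMean p (fun w => ∑ k, twistedDeriv τ (e k) (twistedDeriv τ (e k) f) w) τ y :=
  (integral_finsetSum _ fun _ _ => integrable_noiseLaw hτ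
    (hasTemperateGrowth_twistedDeriv τ _ (hasTemperateGrowth_twistedDeriv τ _ hf)) y).symm

lemma sum_noiseMean_twistedDeriv_twistedDeriv_one (hτ : 0 < τ) (e : OrthonormalBasis ι ℝ E)
    (y : E) :
    ∑ k, noiseMean p (twistedDeriv τ (e k) (twistedDeriv τ (e k) fun _ => 1)) τ y =
      2 * noiseMean p (heatRate τ * fun _ => 1) τ y := by
  rw [sum_noiseMean_twistedDeriv_twistedDeriv hτ e (.const 1)]
  simp only [sum_twistedDeriv_twistedDeriv_one, noiseMean, integral_const_mul, Pi.mul_apply,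
    mul_one]

lemma sum_noiseMean_twistedDeriv_twistedDeriv_inner (hτ : 0 < τ) (e : OrthonormalBasis ι ℝ E)
    (v y : E) :
    ∑ k, noiseMean p (twistedDeriv τ (e k) (twistedDeriv τ (e k) fun w => ⟪v, w⟫)) τ y =
      2 * noiseMean p (heatRate τ * fun w => ⟪v, w⟫) τ y -
        2 / τ * noiseMean p (fun w => ⟪v, w⟫) τ y := by
  have hv := hasTemperateGrowth_inner v
  have hrate_mul : Integrable (fun w => heatRate τ w * ⟪v, w⟫) (noiseLaw p τ y) :=
    integrable_noiseLaw hτ ((hasTemperateGrowth_heatRate τ).mul hv) y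
  rw [sum_noiseMean_twistedDeriv_twistedDeriv hτ e hv]
  simp only [sum_twistedDeriv_twistedDeriv_inner, noiseMean, Pi.mul_apply]
  rw [integral_sub (hrate_mul.const_mul 2) ((integrable_noiseLaw hτ hv y).const_mul (2 / τ)),
    integral_const_mul, integral_const_mul]

lemma sum_meanProductRate_twistedDeriv_twistedDeriv (hτ : 0 < τ) (e : OrthonormalBasis ι ℝ E)
    (u v y : E) :
    ∑ k, meanProductRate p (fun h => twistedDeriv τ (e k) (twistedDeriv τ (e k) h))
        (fun w => ⟪u, w⟫) (fun w => ⟪v, w⟫) τ y =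
      2 * meanProductRate p (heatRate τ * ·) (fun w => ⟪u, w⟫) (fun w => ⟪v, w⟫) τ y -
        4 / τ * (noiseMean p (fun w => ⟪u, w⟫) τ y * noiseMean p (fun w => ⟪v, w⟫) τ y) := by
  simp only [meanProductRate, Finset.sum_sub_distrib, Finset.sum_add_distrib, ← Finset.sum_mul,
    ← Finset.mul_sum, sum_noiseMean_twistedDeriv_twistedDeriv_one hτ,
    sum_noiseMean_twistedDeriv_twistedDeriv_inner hτ]
  ring

end TwistedLaplacian

section CovarianceDynamics

variable {E : Type*} [NormedAddCommGroup E] [InnerProductSpace ℝ E] [MeasurableSpace E]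
  [BorelSpace E]

/-- The conditional covariance of `⟪u, Y - X⟫` and `⟪v, Y - X⟫` given `Y = y`, where
`Y = X + √τ Z`. -/
def noiseCov (p : Measure E) (u v : E) (τ : ℝ) (y : E) : ℝ :=
  cov[fun w => ⟪u, w⟫, fun w => ⟪v, w⟫; noiseLaw p τ y]

variable {p : Measure E} [IsProbabilityMeasure p] {τ : ℝ}

lemma noiseCov_eq_sub (hτ : 0 < τ) (u v y : E) :
    noiseCov p u v τ y = noiseMean p (fun w => ⟪u, w⟫ * ⟪v, w⟫) τ y -
      noiseMean p (fun w => ⟪u, w⟫) τ y * noiseMean p (fun w => ⟪v, w⟫) τ y := by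
  have := isProbabilityMeasure_noiseLaw (p := p) hτ.le y
  exact ProbabilityTheory.covariance_eq_sub
    (memLp_two_noiseLaw hτ (hasTemperateGrowth_inner u) y)
    (memLp_two_noiseLaw hτ (hasTemperateGrowth_inner v) y)

lemma noiseMean_twistedDeriv_inner (hτ : 0 < τ) (u v y : E) :
    noiseMean p (twistedDeriv τ u fun w => ⟪v, w⟫) τ y =
      ⟪v, u⟫ - noiseMean p (fun w => ⟪v, w⟫ * ⟪u, w⟫) τ y / τ := by
  have := isProbabilityMeasure_noiseLaw (p := p) hτ.le y
  have hvu := integrable_noiseLaw (p := p) hτ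
    ((hasTemperateGrowth_inner v).fun_mul (hasTemperateGrowth_inner u)) y
  rw [twistedDeriv_inner, twistedDeriv_const]
  simp only [noiseMean, ← mul_assoc]
  rw [integral_add (integrable_const _) (hvu.mul_const _), integral_mul_const, integral_const,
    probReal_univ, one_smul]
  ring

lemma noiseMeanDeriv_inner (hτ : 0 < τ) (u v y : E) :
    noiseMeanDeriv p u (fun w => ⟪v, w⟫) τ y = ⟪v, u⟫ - noiseCov p v u τ y / τ := by
  have hone : noiseMean p (twistedDeriv τ u fun _ => 1) τ y =
      -noiseMean p (fun w => ⟪u, w⟫) τ y / τ := by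
    simp only [twistedDeriv_const, noiseMean, integral_mul_const]
    ring
  rw [noiseMeanDeriv, noiseMean_twistedDeriv_inner hτ, hone, noiseCov_eq_sub hτ]
  ring

variable {ι : Type*} [Fintype ι]

lemma sum_inner_mul_noiseCov (hτ : 0 < τ) (e : OrthonormalBasis ι ℝ E) (u v y : E) :
    ∑ k, ⟪v, e k⟫ * noiseCov p u (e k) τ y = noiseCov p u v τ y := by
  have := isProbabilityMeasure_noiseLaw (p := p) hτ.le y
  have hmem (v : E) : MemLp (fun w => ⟪v, w⟫) 2 (noiseLaw p τ y) :=
    memLp_two_noiseLaw hτ (hasTemperateGrowth_inner v) y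
  simp only [noiseCov, ← ProbabilityTheory.covariance_const_mul_right]
  rw [← ProbabilityTheory.covariance_fun_sum_right (fun k => (hmem (e k)).const_mul _) (hmem u)]
  simp only [e.sum_inner_mul_inner]

lemma sum_noiseMeanDeriv_mul (hτ : 0 < τ) (e : OrthonormalBasis ι ℝ E) (u v y : E) :
    ∑ k, noiseMeanDeriv p (e k) (fun w => ⟪u, w⟫) τ y *
        noiseMeanDeriv p (e k) (fun w => ⟪v, w⟫) τ y =
      ⟪u, v⟫ - 2 / τ * noiseCov p u v τ y +
        1 / τ ^ 2 * ∑ k, noiseCov p u (e k) τ y * noiseCov p (e k) v τ y := by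
  have hcomm (u v : E) : noiseCov p u v τ y = noiseCov p v u τ y :=
    ProbabilityTheory.covariance_comm _ _
  have hterm (k : ι) : noiseMeanDeriv p (e k) (fun w => ⟪u, w⟫) τ y *
      noiseMeanDeriv p (e k) (fun w => ⟪v, w⟫) τ y =
      ⟪u, e k⟫ * ⟪e k, v⟫ - 1 / τ * (⟪v, e k⟫ * noiseCov p u (e k) τ y) -
        1 / τ * (⟪u, e k⟫ * noiseCov p v (e k) τ y) +
        1 / τ ^ 2 * (noiseCov p u (e k) τ y * noiseCov p (e k) v τ y) := by
    rw [noiseMeanDeriv_inner hτ, noiseMeanDeriv_inner hτ, real_inner_comm (e k) v, hcomm (e k) v]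
    ring
  simp only [hterm, Finset.sum_add_distrib, Finset.sum_sub_distrib, ← Finset.mul_sum,
    e.sum_inner_mul_inner, sum_inner_mul_noiseCov hτ, hcomm v u]
  ring

variable [FiniteDimensional ℝ E]

lemma integral_density_mul_noiseMean_inner_mul_inner (hτ : 0 < τ) (u v : E) :
    ∫ y, density p τ y * noiseMean p (fun w => ⟪u, w⟫ * ⟪v, w⟫) τ y = τ * ⟪u, v⟫ := by
  have hv := hasTemperateGrowth_inner v
  have huv : Integrable fun y => density p τ y * noiseMean p (fun w => ⟪u, w⟫ * ⟪v, w⟫) τ y :=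
    (momentBounded_noiseMean hτ ((hasTemperateGrowth_inner u).fun_mul hv)).integrable hτ
      ⟨le_rfl, le_rfl⟩
  have hzero := integral_smoothing_twistedDeriv (p := p) hτ (hasTemperateGrowth_inner u) v
  simp only [← density_mul_noiseMean hτ
    (hasTemperateGrowth_twistedDeriv τ v (hasTemperateGrowth_inner u)).1.continuous,
    noiseMean_twistedDeriv_inner hτ, mul_sub, ← mul_div_assoc] at hzero
  rw [integral_sub ((integrable_density hτ).mul_const _) (huv.div_const τ), integral_mul_const,
    integral_div, integral_density hτ, one_mul, sub_eq_zero, eq_div_iff hτ.ne'] at hzero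
  rw [← hzero, mul_comm]

lemma momentBounded_noiseCov {a b : ℝ} (ha : 0 < a) (u v : E) :
    MomentBounded p a b (noiseCov p u v) := by
  have hu := hasTemperateGrowth_inner u
  have hv := hasTemperateGrowth_inner v
  obtain ⟨hmeas, C, m, hC, hle⟩ := (momentBounded_noiseMean (p := p) (b := b) ha
    (hu.fun_mul hv)).sub ha ((momentBounded_noiseMean ha hu).mul ha (momentBounded_noiseMean ha hv))
  refine ⟨fun τ hτ => ?_, C, m, hC, fun τ hτ y => ?_⟩
  · rw [show noiseCov p u v τ = _ from funext (noiseCov_eq_sub (ha.trans_le hτ.1) u v)]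
    exact hmeas τ hτ
  · rw [noiseCov_eq_sub (ha.trans_le hτ.1)]
    exact hle τ hτ y

lemma measurable_noiseCov (hτ : 0 < τ) (u v : E) : Measurable (noiseCov p u v τ) :=
  (momentBounded_noiseCov (b := τ) hτ u v).1 τ ⟨le_rfl, le_rfl⟩

lemma integrable_density_mul_noiseMeanDeriv_mul (hτ : 0 < τ) {f g : E → ℝ}
    (hf : f.HasTemperateGrowth) (hg : g.HasTemperateGrowth) (u : E) :
    Integrable fun y =>
      density p τ y * (noiseMeanDeriv p u f τ y * noiseMeanDeriv p u g τ y) := by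
  have hderiv {h : E → ℝ} (hh : h.HasTemperateGrowth) : MomentBounded p τ τ fun σ y =>
      noiseMean p (twistedDeriv τ u h) σ y -
        noiseMean p h σ y * noiseMean p (twistedDeriv τ u fun _ => 1) σ y :=
    (momentBounded_noiseMean hτ (hasTemperateGrowth_twistedDeriv τ u hh)).sub hτ
      ((momentBounded_noiseMean hτ hh).mul hτ
        (momentBounded_noiseMean hτ (hasTemperateGrowth_twistedDeriv τ u (.const 1))))
  exact ((hderiv hf).mul hτ (hderiv hg)).integrable hτ ⟨le_rfl, le_rfl⟩

lemma integrable_density_mul_secondDeriv (hτ : 0 < τ) {f g : E → ℝ}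
    (hf : f.HasTemperateGrowth) (hg : g.HasTemperateGrowth) (u : E) :
    Integrable fun y => density p τ y *
      (meanProductRate p (fun h => twistedDeriv τ u (twistedDeriv τ u h)) f g τ y +
        2 * (noiseMeanDeriv p u f τ y * noiseMeanDeriv p u g τ y)) := by
  have hrate := (MomentBounded.meanProductRate (p := p) hτ hf hg
    (L := fun _ h => twistedDeriv τ u (twistedDeriv τ u h)) fun h hh => momentBounded_noiseMean hτ
      (hasTemperateGrowth_twistedDeriv τ u (hasTemperateGrowth_twistedDeriv τ u hh))).integrable hτ
        ⟨le_rfl, le_rfl⟩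
  simpa only [mul_add, mul_left_comm _ (2 : ℝ)] using
    hrate.fun_add ((integrable_density_mul_noiseMeanDeriv_mul hτ hf hg u).const_mul 2)

lemma integral_density_mul_secondDeriv (hτ : 0 < τ) {f g : E → ℝ}
    (hf : f.HasTemperateGrowth) (hg : g.HasTemperateGrowth) (u : E) :
    ∫ y, density p τ y *
      (meanProductRate p (fun h => twistedDeriv τ u (twistedDeriv τ u h)) f g τ y +
        2 * (noiseMeanDeriv p u f τ y * noiseMeanDeriv p u g τ y)) = 0 := by
  have hrate := (MomentBounded.meanProductRate (p := p) hτ hf hg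
    (L := fun _ => twistedDeriv τ u) fun h hh => momentBounded_noiseMean hτ
      (hasTemperateGrowth_twistedDeriv τ u hh)).integrable hτ ⟨le_rfl, le_rfl⟩
  exact integral_eq_zero_of_hasDerivAt_line hrate (integrable_density_mul_secondDeriv hτ hf hg u)
    fun y => by simpa using hasDerivAt_density_mul_meanProductRate_line (p := p) hτ hf hg y u 0

lemma integral_density_mul_meanProductRate_heatRate (hτ : 0 < τ) (e : OrthonormalBasis ι ℝ E)
    (u v : E) :
    ∫ y, density p τ y *
        meanProductRate p (heatRate τ * ·) (fun w => ⟪u, w⟫) (fun w => ⟪v, w⟫) τ y =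
      2 / τ * (∫ y, density p τ y *
        (noiseMean p (fun w => ⟪u, w⟫) τ y * noiseMean p (fun w => ⟪v, w⟫) τ y)) -
      ∫ y, density p τ y * ∑ k, noiseMeanDeriv p (e k) (fun w => ⟪u, w⟫) τ y *
        noiseMeanDeriv p (e k) (fun w => ⟪v, w⟫) τ y := by
  have hu := hasTemperateGrowth_inner u
  have hv := hasTemperateGrowth_inner v
  have hprod := ((momentBounded_noiseMean (p := p) hτ hu).mul hτ
    (momentBounded_noiseMean hτ hv)).integrable hτ ⟨le_rfl, le_rfl⟩
  have hderiv := integrable_finsetSum Finset.univ fun k _ =>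
    integrable_density_mul_noiseMeanDeriv_mul (p := p) hτ hu hv (e k)
  have hsecond := integrable_finsetSum Finset.univ fun k _ =>
    integrable_density_mul_secondDeriv (p := p) hτ hu hv (e k)
  have hdiff : Integrable fun y => 2 / τ * (density p τ y *
      (noiseMean p (fun w => ⟪u, w⟫) τ y * noiseMean p (fun w => ⟪v, w⟫) τ y)) -
        ∑ k, density p τ y * (noiseMeanDeriv p (e k) (fun w => ⟪u, w⟫) τ y *
          noiseMeanDeriv p (e k) (fun w => ⟪v, w⟫) τ y) := (hprod.const_mul _).sub hderiv
  have hzero : ∫ y, ∑ k, density p τ y *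
      (meanProductRate p (fun h => twistedDeriv τ (e k) (twistedDeriv τ (e k) h))
        (fun w => ⟪u, w⟫) (fun w => ⟪v, w⟫) τ y +
        2 * (noiseMeanDeriv p (e k) (fun w => ⟪u, w⟫) τ y *
          noiseMeanDeriv p (e k) (fun w => ⟪v, w⟫) τ y)) = 0 := by
    rw [integral_finsetSum _ fun k _ => integrable_density_mul_secondDeriv hτ hu hv (e k)]
    exact Finset.sum_eq_zero fun k _ => integral_density_mul_secondDeriv hτ hu hv (e k)
  simp only [Finset.mul_sum]
  rw [← integral_const_mul, ← integral_sub (hprod.const_mul _) hderiv, ← add_zero (∫ _, _ - _),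
    ← mul_zero (1 / 2 : ℝ), ← hzero, ← integral_const_mul, ← integral_add
      hdiff (hsecond.const_mul _)]
  congr with y
  simp only [← Finset.mul_sum, Finset.sum_add_distrib,
    sum_meanProductRate_twistedDeriv_twistedDeriv hτ]
  ring

lemma hasDerivAt_integral_density_mul_noiseMean_mul (hτ : 0 < τ) {f g : E → ℝ}
    (hf : f.HasTemperateGrowth) (hg : g.HasTemperateGrowth) :
    HasDerivAt (fun τ => ∫ y, density p τ y * (noiseMean p f τ y * noiseMean p g τ y))
      (∫ y, density p τ y * meanProductRate p (heatRate τ * ·) f g τ y) τ := by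
  have hτ2 : 0 < τ / 2 := half_pos hτ
  have hprod {a b : ℝ} (ha : 0 < a) :
      MomentBounded p a b fun τ y => noiseMean p f τ y * noiseMean p g τ y :=
    (momentBounded_noiseMean ha hf).mul ha (momentBounded_noiseMean ha hg)
  have hrate : MomentBounded p (τ / 2) (2 * τ)
      fun τ => meanProductRate p (heatRate τ * ·) f g τ :=
    MomentBounded.meanProductRate hτ2 hf hg (L := fun τ => (heatRate τ * ·))
      fun h hh => momentBounded_noiseMean_heatRate_mul hτ2 hh
  have hmem : τ ∈ Icc (τ / 2) (2 * τ) := ⟨by linarith, by linarith⟩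
  obtain ⟨B, hB, hB_le⟩ := hrate.exists_integrable_bound hτ2 (hmem.1.trans hmem.2)
  refine (hasDerivAt_integral_of_dominated_loc_of_deriv_le
    (F := fun τ y => density p τ y * (noiseMean p f τ y * noiseMean p g τ y))
    (F' := fun τ y => density p τ y * meanProductRate p (heatRate τ * ·) f g τ y) (bound := B)
    (Icc_mem_nhds (half_lt_self hτ) (by linarith : τ < 2 * τ)) ?_
    ((hprod hτ).integrable hτ ⟨le_rfl, le_rfl⟩) (hrate.integrable hτ2 hmem).1
    (.of_forall fun y σ hσ => hB_le σ hσ y) hB (.of_forall fun y σ hσ => ?_)).2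
  · filter_upwards [Ioi_mem_nhds hτ] with σ hσ using
      ((hprod hσ).integrable hσ ⟨le_rfl, le_rfl⟩).1
  · exact hasDerivAt_density_mul_noiseMean_mul (hτ2.trans_le hσ.1) hf hg y

lemma integral_density_mul_noiseCov (hτ : 0 < τ) (u v : E) :
    ∫ y, density p τ y * noiseCov p u v τ y = τ * ⟪u, v⟫ - ∫ y, density p τ y *
      (noiseMean p (fun w => ⟪u, w⟫) τ y * noiseMean p (fun w => ⟪v, w⟫) τ y) := by
  have hu := hasTemperateGrowth_inner u
  have hv := hasTemperateGrowth_inner v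
  simp only [noiseCov_eq_sub hτ, mul_sub]
  rw [integral_sub, integral_density_mul_noiseMean_inner_mul_inner hτ]
  · exact (momentBounded_noiseMean hτ (hu.fun_mul hv)).integrable hτ ⟨le_rfl, le_rfl⟩
  · exact ((momentBounded_noiseMean hτ hu).mul hτ (momentBounded_noiseMean hτ hv)).integrable hτ
      ⟨le_rfl, le_rfl⟩

lemma integral_density_mul_sum_noiseMeanDeriv_mul (hτ : 0 < τ) (e : OrthonormalBasis ι ℝ E)
    (u v : E) :
    ∫ y, density p τ y * ∑ k, noiseMeanDeriv p (e k) (fun w => ⟪u, w⟫) τ y *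
        noiseMeanDeriv p (e k) (fun w => ⟪v, w⟫) τ y =
      ⟪u, v⟫ - 2 / τ * (∫ y, density p τ y * noiseCov p u v τ y) +
        1 / τ ^ 2 * ∫ y, density p τ y * ∑ k, noiseCov p u (e k) τ y * noiseCov p (e k) v τ y := by
  have hdens := integrable_density (p := p) hτ
  have hcov := (momentBounded_noiseCov (p := p) hτ u v).integrable hτ ⟨le_rfl, le_rfl⟩
  have hcov_mul := integrable_finsetSum Finset.univ fun k _ =>
    ((momentBounded_noiseCov (p := p) hτ u (e k)).mul hτ
      (momentBounded_noiseCov hτ (e k) v)).integrable hτ ⟨le_rfl, le_rfl⟩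
  have hdiff : Integrable fun y => density p τ y * ⟪u, v⟫ -
      2 / τ * (density p τ y * noiseCov p u v τ y) := (hdens.mul_const _).sub (hcov.const_mul _)
  simp only [← Finset.mul_sum] at hcov_mul
  simp only [sum_noiseMeanDeriv_mul hτ, mul_add, mul_sub, mul_left_comm (density _ _ _) (_ / _)]
  rw [integral_add hdiff (hcov_mul.const_mul _),
    integral_sub (hdens.mul_const _) (hcov.const_mul _), integral_mul_const, integral_const_mul,
    integral_const_mul, integral_density hτ, one_mul]

lemma hasDerivAt_integral_density_mul_noiseCov (hτ : 0 < τ) (e : OrthonormalBasis ι ℝ E)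
    (u v : E) :
    HasDerivAt (fun τ => ∫ y, density p τ y * noiseCov p u v τ y)
      (1 / τ ^ 2 * ∫ y, density p τ y * ∑ k, noiseCov p u (e k) τ y * noiseCov p (e k) v τ y)
      τ := by
  have hmeans := hasDerivAt_integral_density_mul_noiseMean_mul (p := p) hτ
    (hasTemperateGrowth_inner u) (hasTemperateGrowth_inner v)
  refine ((((hasDerivAt_id τ).mul_const ⟪u, v⟫).fun_sub hmeans).congr_deriv
    ?_).congr_of_eventuallyEq ?_
  · rw [integral_density_mul_meanProductRate_heatRate hτ e,
      integral_density_mul_sum_noiseMeanDeriv_mul hτ, integral_density_mul_noiseCov hτ]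
    field_simp
    ring
  · filter_upwards [Ioi_mem_nhds hτ] with σ hσ using integral_density_mul_noiseCov hσ u v

end CovarianceDynamics

section GaussianSmoothing

variable {E : Type*} [NormedAddCommGroup E] [InnerProductSpace ℝ E] [MeasurableSpace E]
  [BorelSpace E] [FiniteDimensional ℝ E] {τ : ℝ}

lemma lintegral_comp_smul {c : ℝ} (hc : 0 < c) {f : E → ℝ≥0∞} (hf : Measurable f) :
    ∫⁻ z, f (c • z) = ENNReal.ofReal (c ^ finrank ℝ E)⁻¹ * ∫⁻ z, f z := by
  rw [← lintegral_map hf (measurable_const_smul c), Measure.map_addHaar_smul _ hc.ne',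
    lintegral_smul_measure, abs_of_pos (by positivity), smul_eq_mul]

lemma lintegral_add_sqrt_smul_mul_heatKernel_one (hτ : 0 < τ) (x : E) {f : E → ℝ≥0∞}
    (hf : Measurable f) :
    ∫⁻ z, ENNReal.ofReal (heatKernel 1 z) * f (x + √τ • z) =
      ∫⁻ y, ENNReal.ofReal (heatKernel τ (y - x)) * f y := by
  have hsqrt : 0 < √τ := sqrt_pos.2 hτ
  have hker : Measurable (heatKernel τ : E → ℝ) := (continuous_heatKernel τ).measurable
  calc ∫⁻ z, ENNReal.ofReal (heatKernel 1 z) * f (x + √τ • z)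
    _ = ENNReal.ofReal (√τ ^ finrank ℝ E) *
          ∫⁻ z, ENNReal.ofReal (heatKernel τ (√τ • z)) * f (x + √τ • z) := by
        rw [← lintegral_const_mul _ (by fun_prop)]
        simp only [heatKernel_one_eq hτ, ENNReal.ofReal_mul (pow_nonneg hsqrt.le _), mul_assoc]
    _ = ∫⁻ v, ENNReal.ofReal (heatKernel τ v) * f (x + v) := by
        rw [lintegral_comp_smul (f := fun v => ENNReal.ofReal (heatKernel τ v) * f (x + v)) hsqrt
          (by fun_prop), ← mul_assoc, ← ENNReal.ofReal_mul (by positivity),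
          mul_inv_cancel₀ (by positivity), ENNReal.ofReal_one, one_mul]
    _ = ∫⁻ y, ENNReal.ofReal (heatKernel τ (y - x)) * f y := by
        rw [← lintegral_sub_right_eq_self _ x]
        simp only [add_sub_cancel]

lemma map_add_sqrt_smul_prod_heatKernel {p : Measure E} [IsProbabilityMeasure p] (hτ : 0 < τ) :
    (p.prod (volume.withDensity fun z : E => ENNReal.ofReal (heatKernel 1 z))).map
        (fun xz => xz.1 + √τ • xz.2) =
      volume.withDensity fun y => ENNReal.ofReal (density p τ y) := by
  have hker (τ : ℝ) : Measurable (heatKernel τ : E → ℝ) := (continuous_heatKernel τ).measurable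
  have hdens : Measurable (density p τ) := measurable_density
  refine Measure.ext_of_lintegral _ fun f hf => ?_
  rw [lintegral_map hf (by fun_prop), lintegral_prod _ (by fun_prop),
    lintegral_withDensity_eq_lintegral_mul _ (by fun_prop) hf]
  have hinner (x : E) :
      ∫⁻ z, f (x + √τ • z) ∂volume.withDensity (fun z => ENNReal.ofReal (heatKernel 1 z)) =
        ∫⁻ y, ENNReal.ofReal (heatKernel τ (y - x)) * f y := by
    rw [lintegral_withDensity_eq_lintegral_mul _ (by fun_prop) (by fun_prop)]
    exact lintegral_add_sqrt_smul_mul_heatKernel_one hτ x hf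
  simp only [hinner]
  rw [lintegral_lintegral_swap (by fun_prop)]
  refine lintegral_congr fun y => ?_
  rw [lintegral_mul_const _ (by fun_prop), Pi.mul_apply, density,
    ofReal_integral_eq_lintegral_ofReal (by
      simpa only [one_mul] using integrable_mul_heatKernel_sub (p := p) (.const 1) hτ y)
    (.of_forall fun x => (heatKernel_pos hτ _).le)]

end GaussianSmoothing

section OrnsteinUhlenbeck

lemma inv_smul_withDensity_exp_eq_tilted {α : Type*} [MeasurableSpace α] {μ : Measure α} {f : α → ℝ}
    (hf : Integrable (fun x => exp (f x)) μ) :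
    ((μ.withDensity fun x => ENNReal.ofReal (exp (f x))) univ)⁻¹ •
        μ.withDensity (fun x => ENNReal.ofReal (exp (f x))) = μ.tilted f := by
  obtain rfl | hμ := eq_zero_or_neZero μ
  · simp
  have hpos := integral_exp_pos hf
  rw [withDensity_apply _ MeasurableSet.univ, Measure.restrict_univ,
    ← ofReal_integral_eq_lintegral_ofReal hf (.of_forall fun _ => (exp_pos _).le),
    ← withDensity_smul' _ _ (ENNReal.inv_ne_top.2 (ENNReal.ofReal_pos.2 hpos).ne'), Measure.tilted]
  congr with x
  rw [Pi.smul_apply, smul_eq_mul, ENNReal.ofReal_div_of_pos hpos, mul_comm, div_eq_mul_inv]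

lemma one_sub_exp_neg_two_mul (t : ℝ) :
    1 - exp (-2 * t) = exp (-t) ^ 2 * (exp (2 * t) - 1) := by
  rw [show -2 * t = -t + -t by ring, show 2 * t = t + t by ring, exp_add, exp_add, exp_neg]
  field_simp

lemma two_mul_exp_neg_two_mul_div_sq (t : ℝ) :
    2 * exp (-2 * t) / (1 - exp (-2 * t)) ^ 2 = 2 * exp (2 * t) / (exp (2 * t) - 1) ^ 2 := by
  rw [neg_mul, exp_neg]
  field_simp

lemma exp_two_mul_sub_one_pos {t : ℝ} (ht : 0 < t) : 0 < exp (2 * t) - 1 :=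
  sub_pos.2 (one_lt_exp_iff.2 (by positivity))

variable {d : ℕ} {p : Measure (Euc d)} {t : ℝ}

lemma stdGaussian_eq_withDensity_heatKernel :
    stdGaussian d = volume.withDensity fun z => ENNReal.ofReal (heatKernel 1 z) := by
  simp only [stdGaussian, heatKernel, finrank_euclideanSpace_fin, mul_one]

lemma neg_norm_sub_exp_smul_sq_div (t : ℝ) (x z : Euc d) :
    -‖x - exp (-t) • z‖ ^ 2 / (2 * (1 - exp (-2 * t))) =
      -‖exp t • x - z‖ ^ 2 / (2 * (exp (2 * t) - 1)) := by
  have hsub : x - exp (-t) • z = exp (-t) • (exp t • x - z) := by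
    rw [smul_sub, smul_smul, ← exp_add, neg_add_cancel, exp_zero, one_smul]
  rw [hsub, norm_smul, one_sub_exp_neg_two_mul, mul_pow, norm_eq_abs, sq_abs, mul_left_comm,
    ← mul_neg, mul_div_mul_left _ _ (by positivity)]

variable [IsProbabilityMeasure p]

lemma posterior_eq_tilted (ht : 0 < t) (x : Euc d) :
    posterior d p t x = p.tilted fun z => -‖exp t • x - z‖ ^ 2 / (2 * (exp (2 * t) - 1)) := by
  have htilted := isProbabilityMeasure_tilted_neg_norm_sub_sq (p := p)
    (exp_two_mul_sub_one_pos ht).le (exp t • x)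
  have hexp : Integrable
      (fun z => exp (-‖exp t • x - z‖ ^ 2 / (2 * (exp (2 * t) - 1)))) p := by
    by_contra hnot
    exact htilted.ne_zero _ (tilted_of_not_integrable hnot)
  simp only [posterior, neg_norm_sub_exp_smul_sq_div]
  exact inv_smul_withDensity_exp_eq_tilted hexp

lemma noiseLaw_eq_map_posterior (ht : 0 < t) (x : Euc d) :
    noiseLaw p (exp (2 * t) - 1) (exp t • x) = (posterior d p t x).map (exp t • x - ·) := by
  rw [posterior_eq_tilted ht, noiseLaw]

lemma isProbabilityMeasure_posterior (ht : 0 < t) (x : Euc d) :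
    IsProbabilityMeasure (posterior d p t x) := by
  rw [posterior_eq_tilted ht]
  exact isProbabilityMeasure_tilted_neg_norm_sub_sq (exp_two_mul_sub_one_pos ht).le _

lemma integrable_apply_posterior (ht : 0 < t) (x : Euc d) (i : Fin d) :
    Integrable (fun z => z i) (posterior d p t x) := by
  have := isProbabilityMeasure_posterior (p := p) ht x
  have hnoise := integrable_noiseLaw (p := p) (exp_two_mul_sub_one_pos ht)
    (hasTemperateGrowth_inner (EuclideanSpace.basisFun (Fin d) ℝ i)) (exp t • x)
  rw [noiseLaw_eq_map_posterior ht, integrable_map_measure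
    (Continuous.aestronglyMeasurable (by fun_prop)) (by fun_prop)] at hnoise
  refine ((integrable_const ((exp t • x) i)).sub hnoise).congr (.of_forall fun z => ?_)
  simp only [Pi.sub_apply, comp_apply, EuclideanSpace.basisFun_inner, PiLp.sub_apply,
    sub_sub_cancel]

lemma postCov_apply_eq_covariance (ht : 0 < t) (x : Euc d) (i j : Fin d) :
    postCov d p t x i j = cov[fun z => z i, fun z => z j; posterior d p t x] := by
  have hmean := eval_integral_piLp (integrable_apply_posterior (p := p) ht x)
  simp only [postCov, Matrix.of_apply, ProbabilityTheory.covariance, postMean, hmean]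

lemma postCov_apply_eq_noiseCov (ht : 0 < t) (x : Euc d) (i j : Fin d) :
    postCov d p t x i j = noiseCov p (EuclideanSpace.basisFun (Fin d) ℝ i)
      (EuclideanSpace.basisFun (Fin d) ℝ j) (exp (2 * t) - 1) (exp t • x) := by
  have := isProbabilityMeasure_posterior (p := p) ht x
  have hint := integrable_apply_posterior (p := p) ht x
  rw [postCov_apply_eq_covariance ht, noiseCov, noiseLaw_eq_map_posterior ht,
    ProbabilityTheory.covariance_map_fun (Continuous.aestronglyMeasurable (by fun_prop))
      (Continuous.aestronglyMeasurable (by fun_prop)) (by fun_prop)]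
  simp only [EuclideanSpace.basisFun_inner, PiLp.sub_apply]
  rw [ProbabilityTheory.covariance_const_sub_left (hint i),
    ProbabilityTheory.covariance_const_sub_right (hint j), neg_neg]

lemma map_exp_smul_ouMarginal (ht : 0 < t) :
    (ouMarginal d p t).map (exp t • ·) =
      volume.withDensity fun y => ENNReal.ofReal (density p (exp (2 * t) - 1) y) := by
  have hsmul (xz : Euc d × Euc d) :
      exp t • (exp (-t) • xz.1 + √(1 - exp (-2 * t)) • xz.2) =
        xz.1 + √(exp (2 * t) - 1) • xz.2 := by
    rw [one_sub_exp_neg_two_mul, sqrt_mul (by positivity), sqrt_sq (exp_pos _).le, smul_add,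
      smul_smul, smul_smul, ← mul_assoc, ← exp_add, add_neg_cancel, exp_zero, one_smul, one_mul]
  rw [ouMarginal, Measure.map_map (by fun_prop) (by fun_prop),
    stdGaussian_eq_withDensity_heatKernel,
    ← map_add_sqrt_smul_prod_heatKernel (exp_two_mul_sub_one_pos ht)]
  exact congrArg (Measure.map · _) (funext hsmul)

lemma integral_ouMarginal (ht : 0 < t) {F : Euc d → ℝ} (hF : Measurable F) :
    ∫ x, F (exp t • x) ∂ouMarginal d p t = ∫ y, density p (exp (2 * t) - 1) y * F y := by
  rw [← integral_map (φ := (exp t • ·)) (by fun_prop) hF.aestronglyMeasurable,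
    map_exp_smul_ouMarginal ht, integral_withDensity_eq_integral_toReal_smul
      measurable_density.ennreal_ofReal (.of_forall fun _ => ENNReal.ofReal_lt_top)]
  simp only [ENNReal.toReal_ofReal (density_pos (exp_two_mul_sub_one_pos ht) _).le, smul_eq_mul]

lemma integral_postCov_apply (ht : 0 < t) (i j : Fin d) :
    ∫ x, postCov d p t x i j ∂ouMarginal d p t = ∫ y, density p (exp (2 * t) - 1) y *
      noiseCov p (EuclideanSpace.basisFun (Fin d) ℝ i) (EuclideanSpace.basisFun (Fin d) ℝ j)
        (exp (2 * t) - 1) y := by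
  simp only [postCov_apply_eq_noiseCov ht]
  exact integral_ouMarginal ht (measurable_noiseCov (exp_two_mul_sub_one_pos ht) _ _)

lemma integral_postCov_mul_self_apply (ht : 0 < t) (i j : Fin d) :
    ∫ x, (postCov d p t x * postCov d p t x) i j ∂ouMarginal d p t =
      ∫ y, density p (exp (2 * t) - 1) y * ∑ k,
        noiseCov p (EuclideanSpace.basisFun (Fin d) ℝ i) (EuclideanSpace.basisFun (Fin d) ℝ k)
          (exp (2 * t) - 1) y *
        noiseCov p (EuclideanSpace.basisFun (Fin d) ℝ k) (EuclideanSpace.basisFun (Fin d) ℝ j)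
          (exp (2 * t) - 1) y := by
  simp only [Matrix.mul_apply, postCov_apply_eq_noiseCov ht]
  have hmeas (u v : Euc d) := measurable_noiseCov (p := p) (exp_two_mul_sub_one_pos ht) u v
  exact integral_ouMarginal ht
    (Finset.measurable_fun_sum _ fun k _ => (hmeas _ _).mul (hmeas _ _))

end OrnsteinUhlenbeck

end GaussianChannel

theorem posterior_covariance_dynamics_general (d : ℕ) (p : Measure (Euc d))
    [IsProbabilityMeasure p] (t : ℝ) (ht : 0 < t) (i j : Fin d) :
    HasDerivAt (fun u => ∫ x, postCov d p u x i j ∂(ouMarginal d p u))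
      (2 * exp (-2 * t) / (1 - exp (-2 * t)) ^ 2 *
        ∫ x, (postCov d p t x * postCov d p t x) i j ∂(ouMarginal d p t)) t := by
  have hvariance : HasDerivAt (fun t => exp (2 * t) - 1) (exp (2 * t) * 2) t := by
    simpa using (((hasDerivAt_id t).const_mul 2).exp).sub_const 1
  have hcov := (GaussianChannel.hasDerivAt_integral_density_mul_noiseCov (p := p)
    (GaussianChannel.exp_two_mul_sub_one_pos ht) (EuclideanSpace.basisFun (Fin d) ℝ)
    (EuclideanSpace.basisFun (Fin d) ℝ i) (EuclideanSpace.basisFun (Fin d) ℝ j)).comp t hvariance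
  rw [GaussianChannel.integral_postCov_mul_self_apply ht]
  refine (hcov.congr_deriv ?_).congr_of_eventuallyEq ?_
  · rw [GaussianChannel.two_mul_exp_neg_two_mul_div_sq]
    ring
  · filter_upwards [Ioi_mem_nhds ht] with s hs using GaussianChannel.integral_postCov_apply hs i j

/-- **Proposition B.2 (stochastic-localization dynamics of the posterior covariance).**
The matrix-valued map `t ↦ E_{x ∼ p_t}[Σ_t(x)]` is differentiable on `(0, ∞)` (entrywise)
with derivative `(2 e^{-2t}/(1 - e^{-2t})²) E_{x ∼ p_t}[Σ_t(x)²]`. -/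
theorem posterior_covariance_dynamics
    (d : ℕ) (hd : 1 ≤ d) (V : Euc d → ℝ) (hV : Measurable V)
    (p : Measure (Euc d)) (hprob : IsProbabilityMeasure p)
    (hp : p = ((gibbs d V) Set.univ)⁻¹ • gibbs d V)
    (hm2 : Integrable (fun x => ‖x‖ ^ 2) p) :
    ∀ t : ℝ, 0 < t → ∀ i j : Fin d,
      HasDerivAt (fun u => ∫ x, postCov d p u x i j ∂(ouMarginal d p u))
        (2 * exp (-2 * t) / (1 - exp (-2 * t)) ^ 2 *
          ∫ x, (postCov d p t x * postCov d p t x) i j ∂(ouMarginal d p t)) t := by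
  exact posterior_covariance_dynamics_general d p
end
end

section
/- (Cross-correlation identity for scores along the OU process, proved inside Lemma B.4.) Let 0 < u < v and let (X_u, X_v) have the joint law of the forward OU process at times u < v, i.e. X_u ∼ p_u and X_v = e^{−(v−u)} X_u + √(1 − e^{−2(v−u)}} ) Z with Z ∼ γ^d independent of X_u. Then, assuming the expectations below are finite, E[⟨∇ ln p_u(X_u), ∇ ln p_v(X_v)⟩] = e^{−(v−u)} E[‖∇ ln p_v(X_v)‖²]. -/
open MeasureTheory Real
open scoped ENNReal RealInnerProductSpace

noncomputable section

/-- The joint law of `(X_u, X_v)` for the forward OU process at times `u < v`: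
`X_u ∼ p_u` and `X_v = e^{-(v-u)} X_u + √(1 - e^{-2(v-u)}) Z`, `Z ∼ γ^d` independent. -/
def jointOU (d : ℕ) (p : Measure (Euc d)) (u v : ℝ) : Measure (Euc d × Euc d) :=
  ((ouMarginal d p u).prod (stdGaussian d)).map fun xz =>
    (xz.1, exp (-(v - u)) • xz.1 + Real.sqrt (1 - exp (-2 * (v - u))) • xz.2)

/-!
Let `b = e^{-(v-u)}` and `r = 1 - e^{-2(v-u)}`, and let `g_r` be the centred Gaussian density of
variance `r`. The Chapman-Kolmogorov identity reads `p_v(y) = ∫ g_r(y - b x) p_u(x) dx`.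
Differentiating it in `y` puts the gradient on the kernel, and integrating by parts in `x` moves it
onto `p_u`, so `b ∇p_v(y) = ∫ g_r(y - b x) ∇p_u(x) dx`. In other words
`E[∇ ln p_u(X_u) | X_v] = b ∇ ln p_v(X_v)`; it remains to take the inner product with
`∇ ln p_v(X_v)`.
-/

open Module
open scoped Gradient

section Measure

variable {α β : Type*} [MeasurableSpace α] [MeasurableSpace β]

lemma snd_withDensity_prod (μ : Measure α) (ν : Measure β) [SFinite μ] [SFinite ν]
    {f : α × β → ℝ≥0∞} (hf : Measurable f) :
    ((μ.prod ν).withDensity f).snd = ν.withDensity fun y => ∫⁻ x, f (x, y) ∂μ := by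
  refine Measure.ext_of_lintegral _ fun g hg => ?_
  rw [Measure.snd, lintegral_map hg measurable_snd,
    lintegral_withDensity_eq_lintegral_mul _ hf (by fun_prop),
    lintegral_withDensity_eq_lintegral_mul _ hf.lintegral_prod_left' hg,
    lintegral_prod_symm' _ (by fun_prop)]
  refine lintegral_congr fun y => ?_
  simp only [Pi.mul_apply]
  rw [lintegral_mul_const _ (by fun_prop)]

variable {G F : Type*} [AddCommGroup G] [MeasurableSpace G] [MeasurableSub₂ G]
  (ν : Measure G) [SFinite ν] [ν.IsAddRightInvariant] [NormedAddCommGroup F]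

lemma map_prodMk_add_prod_withDensity [MeasurableAdd₂ G] (μ : Measure α) {φ : α → G}
    (hφ : Measurable φ) {f : G → ℝ≥0∞} (hf : Measurable f) :
    (μ.prod (ν.withDensity f)).map (fun w => (w.1, φ w.1 + w.2)) =
      (μ.prod ν).withDensity fun w => f (w.2 - φ w.1) := by
  refine Measure.ext_of_lintegral _ fun g hg => ?_
  rw [lintegral_map hg (by fun_prop), prod_withDensity_right hf,
    lintegral_withDensity_eq_lintegral_mul _ (by fun_prop) (by fun_prop),
    lintegral_withDensity_eq_lintegral_mul _ (by fun_prop) hg,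
    lintegral_prod _ (by fun_prop), lintegral_prod _ (by fun_prop)]
  refine lintegral_congr fun x => ?_
  rw [← lintegral_sub_right_eq_self _ (φ x)]
  simp only [Pi.mul_apply, add_sub_cancel]

lemma integrable_prod_comp_sub (μ : Measure α) [IsFiniteMeasure μ] {φ : α → G}
    (hφ : Measurable φ) {f : G → F} (hf : Integrable f ν) :
    Integrable (fun w : G × α => f (w.1 - φ w.2)) (ν.prod μ) := by
  have shear : MeasurePreserving (fun w : α × G => (w.1, w.2 - φ w.1)) (μ.prod ν) (μ.prod ν) :=
    (MeasurePreserving.id μ).skew_product (g := fun z x => x - φ z)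
      (by unfold Function.uncurry; fun_prop)
      (Filter.Eventually.of_forall fun z => map_sub_right_eq_self ν (φ z))
  exact (shear.integrable_comp_of_integrable (hf.comp_snd μ)).swap

lemma integrable_integral_comp_sub [NormedSpace ℝ F] (μ : Measure α) [IsFiniteMeasure μ]
    {φ : α → G} (hφ : Measurable φ) {f : G → F} (hf : Integrable f ν) :
    Integrable (fun x => ∫ z, f (x - φ z) ∂μ) ν :=
  (integrable_prod_comp_sub ν μ hφ hf).integral_prod_left

end Measure

section Gradient

variable {E : Type*} [NormedAddCommGroup E] [InnerProductSpace ℝ E]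

lemma hasGradientAt_comp_sub_smul [CompleteSpace E] {f : E → ℝ} {b : ℝ} {x y : E}
    (hf : DifferentiableAt ℝ f (y - b • x)) :
    HasGradientAt (fun x => f (y - b • x)) (-b • ∇ f (y - b • x)) x := by
  have inner_deriv : HasFDerivAt (fun x => y - b • x) (-(b • ContinuousLinearMap.id ℝ E)) x :=
    ((hasFDerivAt_id x).const_smul b).const_sub y
  rw [hasGradientAt_iff_hasFDerivAt]
  refine (hf.hasGradientAt.hasFDerivAt.comp x inner_deriv).congr_fderiv ?_
  ext v
  simp

variable [FiniteDimensional ℝ E] [MeasurableSpace E] [BorelSpace E]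

lemma integral_smul_gradient_eq_neg_of_integrable (ν : Measure E) [ν.IsAddHaarMeasure]
    {f g : E → ℝ} (hf'g : Integrable (fun x => g x • ∇ f x) ν)
    (hfg' : Integrable (fun x => f x • ∇ g x) ν) (hfg : Integrable (fun x => f x * g x) ν)
    (hf : Differentiable ℝ f) (hg : Differentiable ℝ g) :
    ∫ x, f x • ∇ g x ∂ν = -∫ x, g x • ∇ f x ∂ν := by
  refine ext_inner_left ℝ fun v => ?_
  have hf'g_v := hf'g.const_inner (𝕜 := ℝ) v
  have hfg'_v := hfg'.const_inner (𝕜 := ℝ) v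
  rw [inner_neg_right, ← integral_inner hfg', ← integral_inner hf'g]
  simp only [real_inner_smul_right, inner_gradient_right, conj_trivial, mul_comm (g _)]
    at hf'g_v hfg'_v ⊢
  exact integral_mul_fderiv_eq_neg_fderiv_mul_of_integrable hf'g_v hfg'_v hfg
    (fun x _ => hf x) (fun x _ => hg x)

lemma hasGradientAt_integral_comp_sub {α : Type*} [MeasurableSpace α] (μ : Measure α)
    [IsFiniteMeasure μ] {φ : α → E} (hφ : Measurable φ) {f : E → ℝ} (hf : Differentiable ℝ f)
    {A B : ℝ} (hA : ∀ x, ‖f x‖ ≤ A) (hB : ∀ x, ‖∇ f x‖ ≤ B) (hf' : Continuous (∇ f)) (x : E) :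
    HasGradientAt (fun x => ∫ z, f (x - φ z) ∂μ) (∫ z, ∇ f (x - φ z) ∂μ) x := by
  have hfc := hf.continuous
  have hfm (x : E) : AEStronglyMeasurable (fun z => f (x - φ z)) μ :=
    (hfc.measurable.comp (measurable_const.sub hφ)).aestronglyMeasurable
  have hf'm : AEStronglyMeasurable (fun z => ∇ f (x - φ z)) μ :=
    (hf'.measurable.comp (measurable_const.sub hφ)).aestronglyMeasurable
  let D := (InnerProductSpace.toDual ℝ E).toContinuousLinearEquiv
  have toDual_integral : InnerProductSpace.toDual ℝ E (∫ z, ∇ f (x - φ z) ∂μ) =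
      ∫ z, InnerProductSpace.toDual ℝ E (∇ f (x - φ z)) ∂μ := (D.integral_comp_comm _).symm
  rw [hasGradientAt_iff_hasFDerivAt, toDual_integral]
  refine hasFDerivAt_integral_of_dominated_of_fderiv_le
    (F' := fun x z => InnerProductSpace.toDual ℝ E (∇ f (x - φ z))) (bound := fun _ => B)
    Filter.univ_mem (.of_forall hfm) (.of_bound (hfm x) A (.of_forall fun z => hA _))
    (D.continuous.comp_aestronglyMeasurable hf'm)
    (.of_forall fun z x _ => ?_) (integrable_const B) (.of_forall fun z x _ => ?_)
  · rw [LinearIsometryEquiv.norm_map]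
    exact hB _
  · exact (hf _).hasGradientAt.hasFDerivAt.comp x ((hasFDerivAt_id x).sub_const (φ z))

end Gradient

section GaussianDensity

variable {E : Type*} [NormedAddCommGroup E] [InnerProductSpace ℝ E]

/-- The density of the centred Gaussian law with covariance `r • 1` on `E`, for `0 < r`. -/
def gaussianDensity (r : ℝ) (x : E) : ℝ :=
  (2 * π * r) ^ (-(finrank ℝ E : ℝ) / 2) * exp (-‖x‖ ^ 2 / (2 * r))

variable {r : ℝ}

lemma gaussianDensity_pos (hr : 0 < r) (x : E) : 0 < gaussianDensity r x := by
  unfold gaussianDensity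
  positivity

lemma gaussianDensity_nonneg (hr : 0 < r) (x : E) : 0 ≤ gaussianDensity r x :=
  (gaussianDensity_pos hr x).le

@[fun_prop]
lemma continuous_gaussianDensity (r : ℝ) : Continuous (gaussianDensity r : E → ℝ) := by
  unfold gaussianDensity
  fun_prop

lemma norm_gaussianDensity_le (hr : 0 < r) (x : E) :
    ‖gaussianDensity r x‖ ≤ (2 * π * r) ^ (-(finrank ℝ E : ℝ) / 2) := by
  rw [norm_of_nonneg (gaussianDensity_nonneg hr x)]
  refine mul_le_of_le_one_right (by positivity) (exp_le_one_iff.mpr ?_)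
  rw [neg_div]
  exact neg_nonpos.mpr (by positivity)

lemma hasGradientAt_gaussianDensity [CompleteSpace E] (r : ℝ) (x : E) :
    HasGradientAt (gaussianDensity r) (-(gaussianDensity r x / r) • x) x := by
  rw [hasGradientAt_iff_hasFDerivAt]
  have exponent_deriv : HasFDerivAt (fun x : E => -‖x‖ ^ 2 / (2 * r))
      ((-(2 * r)⁻¹) • (2 • innerSL ℝ x)) x := by
    refine ((hasStrictFDerivAt_norm_sq x).hasFDerivAt.const_mul _).congr_of_eventuallyEq ?_
    exact .of_forall fun y => by ring
  refine (exponent_deriv.exp.const_mul _).congr_fderiv ?_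
  ext v
  simp only [gaussianDensity, smul_apply, innerSL_apply_apply,
    InnerProductSpace.toDual_apply_apply, real_inner_smul_left, smul_eq_mul, nsmul_eq_mul]
  ring

lemma differentiable_gaussianDensity [CompleteSpace E] (r : ℝ) :
    Differentiable ℝ (gaussianDensity r : E → ℝ) :=
  fun x => (hasGradientAt_gaussianDensity r x).differentiableAt

lemma gradient_gaussianDensity [CompleteSpace E] (r : ℝ) :
    ∇ (gaussianDensity r) = fun x : E => -(gaussianDensity r x / r) • x :=
  gradient_eq (hasGradientAt_gaussianDensity r)

@[fun_prop]
lemma continuous_gradient_gaussianDensity [CompleteSpace E] (r : ℝ) :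
    Continuous (∇ (gaussianDensity r : E → ℝ)) := by
  rw [gradient_gaussianDensity]
  fun_prop

-- The factor `‖x‖` is absorbed by doubling the variance.
lemma exists_norm_gradient_gaussianDensity_le [CompleteSpace E] (hr : 0 < r) :
    ∃ C, 0 ≤ C ∧ ∀ x : E, ‖∇ (gaussianDensity r) x‖ ≤ C * gaussianDensity (2 * r) x := by
  set A := (2 * π * r) ^ (-(finrank ℝ E : ℝ) / 2)
  set B := (2 * π * (2 * r)) ^ (-(finrank ℝ E : ℝ) / 2) with hB
  have hB0 : B ≠ 0 := (show 0 < B by positivity).ne'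
  refine ⟨A / r * (1 + r) / B, by positivity, fun x => ?_⟩
  set s := ‖x‖ ^ 2 / (4 * r) with hs
  have norm_le : ‖x‖ ≤ (1 + r) * exp s := by
    have amgm : ‖x‖ ≤ s + r := by
      have : s + r - ‖x‖ = (‖x‖ - 2 * r) ^ 2 / (4 * r) := by rw [hs]; field_simp; ring
      linarith [show 0 ≤ (‖x‖ - 2 * r) ^ 2 / (4 * r) by positivity]
    have hs0 : 0 ≤ s := by positivity
    calc ‖x‖ ≤ (1 + r) * (s + 1) := by nlinarith
      _ ≤ (1 + r) * exp s := by gcongr; exact add_one_le_exp s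
  have exp_eq : exp (-‖x‖ ^ 2 / (2 * r)) = exp (-s) * exp (-s) := by
    rw [← exp_add, hs]; congr 1; field_simp; ring
  have density_eq : gaussianDensity (2 * r) x = B * exp (-s) := by
    rw [gaussianDensity, ← hB, hs]; congr 2; field_simp; ring
  calc ‖∇ (gaussianDensity r) x‖ = A / r * exp (-s) * (exp (-s) * ‖x‖) := by
        rw [gradient_gaussianDensity, norm_smul, norm_neg, norm_div, norm_of_nonneg hr.le,
          norm_of_nonneg (gaussianDensity_nonneg hr x), gaussianDensity, exp_eq]
        ring
    _ ≤ A / r * exp (-s) * (exp (-s) * ((1 + r) * exp s)) := by gcongr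
    _ = A / r * (1 + r) / B * gaussianDensity (2 * r) x := by
        rw [density_eq, exp_neg]; field_simp

lemma exists_norm_gradient_gaussianDensity_le_const [CompleteSpace E] (hr : 0 < r) :
    ∃ C, ∀ x : E, ‖∇ (gaussianDensity r) x‖ ≤ C := by
  obtain ⟨C, hC, hbound⟩ := exists_norm_gradient_gaussianDensity_le (E := E) hr
  exact ⟨_, fun x => (hbound x).trans <| mul_le_mul_of_nonneg_left
    ((le_norm_self _).trans (norm_gaussianDensity_le (by positivity) x)) hC⟩

lemma gaussianDensity_eq_sqrt_smul (hr : 0 < r) (x : E) :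
    gaussianDensity r x = |(√r ^ finrank ℝ E)⁻¹| * gaussianDensity 1 ((√r)⁻¹ • x) := by
  have hs : 0 < √r := sqrt_pos.mpr hr
  have normalization : r ^ (-(finrank ℝ E : ℝ) / 2) = (√r ^ finrank ℝ E)⁻¹ := by
    rw [← rpow_natCast, ← rpow_neg hs.le, sqrt_eq_rpow, ← rpow_mul hr.le]
    congr 1
    ring
  rw [abs_of_pos (by positivity), gaussianDensity, gaussianDensity, norm_smul, norm_inv,
    norm_of_nonneg hs.le, mul_pow, inv_pow, sq_sqrt hr.le, mul_rpow (by positivity) hr.le,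
    normalization, ← mul_assoc, mul_one, mul_comm ((2 * π) ^ _)]
  congr 2
  field_simp

-- Completing the square.
lemma gaussianDensity_mul_gaussianDensity {s t : ℝ} (hs : 0 < s) (ht : 0 < t) (b : ℝ) (x y : E) :
    gaussianDensity s x * gaussianDensity t (y - b • x) = gaussianDensity (t + b ^ 2 * s) y *
      gaussianDensity (s * t / (t + b ^ 2 * s)) (x - (b * s / (t + b ^ 2 * s)) • y) := by
  have : t + b ^ 2 * s ≠ 0 := by positivity
  simp only [gaussianDensity]
  rw [mul_mul_mul_comm, mul_mul_mul_comm ((2 * π * (t + b ^ 2 * s)) ^ _), ← exp_add, ← exp_add,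
    ← mul_rpow (by positivity) (by positivity), ← mul_rpow (by positivity) (by positivity)]
  congr 2
  · field_simp
  · rw [norm_sub_sq_real, norm_sub_sq_real, norm_smul, norm_smul, real_inner_smul_right,
      real_inner_smul_right, real_inner_comm x y, mul_pow, mul_pow]
    simp only [norm_eq_abs, sq_abs]
    field_simp
    ring

variable [FiniteDimensional ℝ E] [MeasurableSpace E] [BorelSpace E]

lemma integral_gaussianDensity (hr : 0 < r) : ∫ x : E, gaussianDensity r x = 1 := by
  have exp_integral := GaussianFourier.integral_rexp_neg_mul_sq_norm (V := E)
    (b := (2 * r)⁻¹) (by positivity)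
  have exponent (x : E) : -‖x‖ ^ 2 / (2 * r) = -(2 * r)⁻¹ * ‖x‖ ^ 2 := by ring
  simp only [gaussianDensity, exponent]
  rw [integral_const_mul, exp_integral, div_inv_eq_mul, ← mul_assoc, mul_comm π,
    ← rpow_add (by positivity), neg_div, neg_add_cancel, rpow_zero]

lemma integrable_gaussianDensity (hr : 0 < r) : Integrable (gaussianDensity r : E → ℝ) :=
  .of_integral_ne_zero (by simp [integral_gaussianDensity hr])

lemma integrable_gradient_gaussianDensity (hr : 0 < r) :
    Integrable (∇ (gaussianDensity r : E → ℝ)) := by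
  obtain ⟨C, -, hC⟩ := exists_norm_gradient_gaussianDensity_le (E := E) hr
  exact ((integrable_gaussianDensity (by positivity)).const_mul C).mono'
    (continuous_gradient_gaussianDensity r).aestronglyMeasurable (.of_forall hC)

lemma integral_gaussianDensity_mul_gaussianDensity {s t : ℝ} (hs : 0 < s) (ht : 0 < t) (b : ℝ)
    (y : E) : ∫ x, gaussianDensity s x * gaussianDensity t (y - b • x) =
      gaussianDensity (t + b ^ 2 * s) y := by
  simp only [gaussianDensity_mul_gaussianDensity hs ht]
  rw [integral_const_mul, integral_sub_right_eq_self, integral_gaussianDensity (by positivity),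
    mul_one]

/-- The centred Gaussian law with covariance `r • 1` on `E`, for `0 < r`. -/
def gaussianMeasure (E : Type*) [NormedAddCommGroup E] [InnerProductSpace ℝ E]
    [FiniteDimensional ℝ E] [MeasurableSpace E] [BorelSpace E] (r : ℝ) : Measure E :=
  volume.withDensity fun x => ENNReal.ofReal (gaussianDensity r x)

instance (r : ℝ) : SFinite (gaussianMeasure E r) := by
  unfold gaussianMeasure
  infer_instance

lemma map_sqrt_smul_gaussianMeasure (hr : 0 < r) :
    (gaussianMeasure E 1).map (√r • ·) = gaussianMeasure E r := by
  have hs : √r ≠ 0 := (sqrt_pos.mpr hr).ne'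
  refine Measure.ext_of_lintegral _ fun g hg => ?_
  simp only [gaussianMeasure]
  rw [lintegral_map hg (by fun_prop),
    lintegral_withDensity_eq_lintegral_mul _ (by fun_prop) (by fun_prop),
    lintegral_withDensity_eq_lintegral_mul _ (by fun_prop) hg]
  calc ∫⁻ x, ENNReal.ofReal (gaussianDensity 1 x) * g (√r • x)
      = ∫⁻ y, ENNReal.ofReal (gaussianDensity 1 ((√r)⁻¹ • y)) * g y
          ∂(volume : Measure E).map (√r • ·) := by
        rw [lintegral_map (by fun_prop) (by fun_prop)]
        simp only [inv_smul_smul₀ hs]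
    _ = ∫⁻ y, ENNReal.ofReal (gaussianDensity r y) * g y := by
        rw [Measure.map_addHaar_smul volume hs, lintegral_smul_measure, smul_eq_mul,
          ← lintegral_const_mul _ (by fun_prop)]
        simp only [gaussianDensity_eq_sqrt_smul hr, ENNReal.ofReal_mul (abs_nonneg _), mul_assoc]

/-- The joint law of `(X, a • X + √r • Z)`, where `X ∼ μ` and the standard Gaussian `Z` are
independent. -/
def gaussianCoupling (a r : ℝ) (μ : Measure E) : Measure (E × E) :=
  (μ.prod (gaussianMeasure E 1)).map fun w => (w.1, a • w.1 + √r • w.2)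

lemma gaussianCoupling_eq_withDensity (μ : Measure E) [SFinite μ] (a : ℝ) (hr : 0 < r) :
    gaussianCoupling a r μ =
      (μ.prod volume).withDensity fun w => ENNReal.ofReal (gaussianDensity r (w.2 - a • w.1)) := by
  have prod_scaled : μ.prod (gaussianMeasure E r) =
      (μ.prod (gaussianMeasure E 1)).map (Prod.map id (√r • ·)) := by
    rw [← map_sqrt_smul_gaussianMeasure hr, ← Measure.map_prod_map μ _ measurable_id (by fun_prop),
      Measure.map_id]
  rw [← map_prodMk_add_prod_withDensity volume μ
    (f := fun x => ENNReal.ofReal (gaussianDensity r x)) (measurable_const_smul a) (by fun_prop),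
    ← gaussianMeasure, prod_scaled, Measure.map_map (by fun_prop) (by fun_prop)]
  rfl

end GaussianDensity

section GaussianSmoothing

variable {E : Type*} [NormedAddCommGroup E] [InnerProductSpace ℝ E] [MeasurableSpace E]

/-- The density of the law of `a • X + √r • Z`, where `X ∼ μ` and the standard Gaussian `Z` are
independent. -/
def gaussianSmoothing (a r : ℝ) (μ : Measure E) (x : E) : ℝ :=
  ∫ z, gaussianDensity r (x - a • z) ∂μ

variable {r s t : ℝ}

lemma gaussianSmoothing_nonneg (a : ℝ) (hr : 0 < r) (μ : Measure E) (x : E) :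
    0 ≤ gaussianSmoothing a r μ x :=
  integral_nonneg fun _ => gaussianDensity_nonneg hr _

variable [FiniteDimensional ℝ E] [BorelSpace E] (μ : Measure E) [IsFiniteMeasure μ]

lemma integrable_gaussianDensity_comp_sub_smul (a : ℝ) (hr : 0 < r) (x : E) :
    Integrable (fun z => gaussianDensity r (x - a • z)) μ :=
  .of_bound (by fun_prop) _ (.of_forall fun _ => norm_gaussianDensity_le hr _)

lemma gaussianSmoothing_pos [NeZero μ] (a : ℝ) (hr : 0 < r) (x : E) :
    0 < gaussianSmoothing a r μ x := by
  have support_eq : Function.support (fun z => gaussianDensity r (x - a • z)) = Set.univ :=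
    Set.eq_univ_of_forall fun z => (gaussianDensity_pos hr _).ne'
  rw [gaussianSmoothing, integral_pos_iff_support_of_nonneg
    (fun _ => gaussianDensity_nonneg hr _) (integrable_gaussianDensity_comp_sub_smul μ a hr x),
    support_eq]
  exact Measure.measure_univ_pos.mpr (NeZero.ne μ)

lemma integrable_gaussianSmoothing (a : ℝ) (hr : 0 < r) :
    Integrable (gaussianSmoothing a r μ) :=
  integrable_integral_comp_sub volume μ (measurable_const_smul a) (integrable_gaussianDensity hr)

lemma hasGradientAt_gaussianSmoothing (a : ℝ) (hr : 0 < r) (x : E) :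
    HasGradientAt (gaussianSmoothing a r μ) (∫ z, ∇ (gaussianDensity r) (x - a • z) ∂μ) x := by
  obtain ⟨C, hC⟩ := exists_norm_gradient_gaussianDensity_le_const (E := E) hr
  exact hasGradientAt_integral_comp_sub μ (measurable_const_smul a)
    (differentiable_gaussianDensity r) (norm_gaussianDensity_le hr) hC
    (continuous_gradient_gaussianDensity r) x

lemma differentiable_gaussianSmoothing (a : ℝ) (hr : 0 < r) :
    Differentiable ℝ (gaussianSmoothing a r μ) :=
  fun x => (hasGradientAt_gaussianSmoothing μ a hr x).differentiableAt

lemma gradient_gaussianSmoothing (a : ℝ) (hr : 0 < r) :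
    ∇ (gaussianSmoothing a r μ) = fun x => ∫ z, ∇ (gaussianDensity r) (x - a • z) ∂μ :=
  gradient_eq (hasGradientAt_gaussianSmoothing μ a hr)

lemma integrable_gradient_gaussianSmoothing (a : ℝ) (hr : 0 < r) :
    Integrable (∇ (gaussianSmoothing a r μ)) := by
  rw [gradient_gaussianSmoothing μ a hr]
  exact integrable_integral_comp_sub volume μ (measurable_const_smul a)
    (integrable_gradient_gaussianDensity hr)

/-- The law of `a • X + √r • Z`, where `X ∼ μ` and the standard Gaussian `Z` are independent,
defined through its density `gaussianSmoothing a r μ`. -/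
def smoothedMeasure (a r : ℝ) (μ : Measure E) : Measure E :=
  volume.withDensity fun x => ENNReal.ofReal (gaussianSmoothing a r μ x)

lemma isFiniteMeasure_smoothedMeasure (a : ℝ) (hr : 0 < r) :
    IsFiniteMeasure (smoothedMeasure a r μ) :=
  isFiniteMeasure_withDensity_ofReal (integrable_gaussianSmoothing μ a hr).2

lemma integral_smoothedMeasure {F : Type*} [NormedAddCommGroup F] [NormedSpace ℝ F] (a : ℝ)
    (hr : 0 < r) (f : E → F) :
    ∫ x, f x ∂smoothedMeasure a r μ = ∫ x, gaussianSmoothing a r μ x • f x := by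
  have hq := (differentiable_gaussianSmoothing μ a hr).continuous
  rw [smoothedMeasure, integral_withDensity_eq_integral_toReal_smul (by fun_prop) (by simp)]
  simp only [ENNReal.toReal_ofReal (gaussianSmoothing_nonneg a hr μ _)]

lemma snd_gaussianCoupling (a : ℝ) (hr : 0 < r) :
    (gaussianCoupling a r μ).snd = smoothedMeasure a r μ := by
  rw [gaussianCoupling_eq_withDensity μ a hr, snd_withDensity_prod _ _ (by fun_prop)]
  simp only [smoothedMeasure, gaussianSmoothing, ofReal_integral_eq_lintegral_ofReal
    (integrable_gaussianDensity_comp_sub_smul μ a hr _)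
    (.of_forall fun _ => gaussianDensity_nonneg hr _)]

lemma gaussianCoupling_smoothedMeasure (a b : ℝ) (hs : 0 < s) (ht : 0 < t) :
    gaussianCoupling b t (smoothedMeasure a s μ) = (volume.prod volume).withDensity fun w =>
      ENNReal.ofReal (gaussianSmoothing a s μ w.1 * gaussianDensity t (w.2 - b • w.1)) := by
  have hq := (differentiable_gaussianSmoothing μ a hs).continuous
  have := isFiniteMeasure_smoothedMeasure μ a hs
  rw [gaussianCoupling_eq_withDensity _ b ht, smoothedMeasure,
    prod_withDensity_left (by fun_prop), ← withDensity_mul _ (by fun_prop) (by fun_prop)]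
  congr 1 with w
  rw [Pi.mul_apply, ENNReal.ofReal_mul (gaussianSmoothing_nonneg a hs μ _)]

lemma integral_gaussianCoupling_smoothedMeasure {F : Type*} [NormedAddCommGroup F]
    [NormedSpace ℝ F] (a b : ℝ) (hs : 0 < s) (ht : 0 < t) {f : E × E → F}
    (hf : Integrable f (gaussianCoupling b t (smoothedMeasure a s μ))) :
    ∫ w, f w ∂gaussianCoupling b t (smoothedMeasure a s μ) =
      ∫ y, ∫ x, gaussianDensity t (y - b • x) • gaussianSmoothing a s μ x • f (x, y) := by
  have hq := (differentiable_gaussianSmoothing μ a hs).continuous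
  have density_smul (w : E × E) :
      (ENNReal.ofReal (gaussianSmoothing a s μ w.1 * gaussianDensity t (w.2 - b • w.1))).toReal •
          f w =
        gaussianDensity t (w.2 - b • w.1) • gaussianSmoothing a s μ w.1 • f w := by
    rw [ENNReal.toReal_ofReal (mul_nonneg (gaussianSmoothing_nonneg a hs μ _)
      (gaussianDensity_nonneg ht _)), mul_comm, mul_smul]
  rw [gaussianCoupling_smoothedMeasure μ a b hs ht] at hf ⊢
  rw [integrable_withDensity_iff_integrable_smul' (by fun_prop) (by simp)] at hf
  rw [integral_withDensity_eq_integral_toReal_smul (by fun_prop) (by simp)]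
  simp only [density_smul] at hf ⊢
  exact integral_prod_symm _ hf

-- Chapman-Kolmogorov.
lemma gaussianSmoothing_smoothedMeasure (a b : ℝ) (hs : 0 < s) (ht : 0 < t) :
    gaussianSmoothing b t (smoothedMeasure a s μ) =
      gaussianSmoothing (b * a) (t + b ^ 2 * s) μ := by
  ext y
  have hint : Integrable (fun w : E × E =>
      gaussianDensity s (w.1 - a • w.2) * gaussianDensity t (y - b • w.1)) (volume.prod μ) :=
    (integrable_prod_comp_sub volume μ (measurable_const_smul a)
      (integrable_gaussianDensity hs)).mul_bdd (by fun_prop)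
      (.of_forall fun _ => norm_gaussianDensity_le ht _)
  calc gaussianSmoothing b t (smoothedMeasure a s μ) y
      = ∫ x, ∫ z, gaussianDensity s (x - a • z) * gaussianDensity t (y - b • x) ∂μ := by
        simp only [gaussianSmoothing, integral_smoothedMeasure μ a hs, smul_eq_mul,
          integral_mul_const]
    _ = ∫ z, (∫ x, gaussianDensity s (x - a • z) * gaussianDensity t (y - b • x)) ∂μ :=
        integral_integral_swap hint
    _ = ∫ z, (∫ x, gaussianDensity s x * gaussianDensity t (y - (b * a) • z - b • x)) ∂μ := by
        congr 1 with z
        rw [← integral_add_right_eq_self _ (a • z)]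
        simp only [add_sub_cancel_right, smul_add, smul_smul, sub_sub, add_comm]
    _ = gaussianSmoothing (b * a) (t + b ^ 2 * s) μ y := by
        simp only [integral_gaussianDensity_mul_gaussianDensity hs ht, gaussianSmoothing]

lemma integrable_gaussianDensity_smul_gradient_gaussianSmoothing (a b : ℝ) (hs : 0 < s)
    (ht : 0 < t) (y : E) :
    Integrable fun x => gaussianDensity t (y - b • x) • ∇ (gaussianSmoothing a s μ) x :=
  (integrable_gradient_gaussianSmoothing μ a hs).bdd_smul _ (by fun_prop)
    (.of_forall fun _ => norm_gaussianDensity_le ht _)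

lemma integral_gaussianDensity_smul_gradient_gaussianSmoothing (a b : ℝ) (hs : 0 < s) (ht : 0 < t)
    (y : E) :
    ∫ x, gaussianDensity t (y - b • x) • ∇ (gaussianSmoothing a s μ) x =
      b • ∇ (gaussianSmoothing (b * a) (t + b ^ 2 * s) μ) y := by
  have := isFiniteMeasure_smoothedMeasure μ a hs
  obtain ⟨C, hC⟩ := exists_norm_gradient_gaussianDensity_le_const (E := E) ht
  have kernel_grad (x : E) := hasGradientAt_comp_sub_smul (b := b)
    (differentiable_gaussianDensity t (y - b • x))
  have hq := integrable_gaussianSmoothing μ a hs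
  have hq_kernel : Integrable fun x => gaussianDensity t (y - b • x) * gaussianSmoothing a s μ x :=
    hq.bdd_mul (by fun_prop) (.of_forall fun _ => norm_gaussianDensity_le ht _)
  have hq_kernel_grad : Integrable fun x =>
      gaussianSmoothing a s μ x • ∇ (gaussianDensity t) (y - b • x) :=
    hq.smul_bdd _ (by fun_prop) (.of_forall fun _ => hC _)
  have kernel_grad_smul (x : E) :
      gaussianSmoothing a s μ x • ∇ (fun x => gaussianDensity t (y - b • x)) x =
        -b • gaussianSmoothing a s μ x • ∇ (gaussianDensity t) (y - b • x) := by
    rw [(kernel_grad x).gradient, smul_comm]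
  calc ∫ x, gaussianDensity t (y - b • x) • ∇ (gaussianSmoothing a s μ) x
      = -∫ x, gaussianSmoothing a s μ x • ∇ (fun x => gaussianDensity t (y - b • x)) x := by
        refine integral_smul_gradient_eq_neg_of_integrable volume ?_
          (integrable_gaussianDensity_smul_gradient_gaussianSmoothing μ a b hs ht y) hq_kernel
          (fun x => (kernel_grad x).differentiableAt) (differentiable_gaussianSmoothing μ a hs)
        simp only [kernel_grad_smul]
        exact hq_kernel_grad.smul (-b)
    _ = b • ∫ x, ∇ (gaussianDensity t) (y - b • x) ∂smoothedMeasure a s μ := by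
        simp only [kernel_grad_smul, neg_smul, integral_neg, integral_smul, neg_neg,
          integral_smoothedMeasure μ a hs]
    _ = b • ∇ (gaussianSmoothing (b * a) (t + b ^ 2 * s) μ) y := by
        rw [← gaussianSmoothing_smoothedMeasure μ a b hs ht, gradient_gaussianSmoothing _ b ht]

lemma gaussianSmoothing_smul_gradient_log (a : ℝ) (hr : 0 < r) (x : E) :
    gaussianSmoothing a r μ x • ∇ (fun y => log (gaussianSmoothing a r μ y)) x =
      ∇ (gaussianSmoothing a r μ) x := by
  rcases eq_zero_or_neZero μ with rfl | _
  · have smoothing_zero : gaussianSmoothing a r (0 : Measure E) = fun _ => 0 := by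
      ext y
      simp [gaussianSmoothing]
    simp [smoothing_zero]
  · have hq := (gaussianSmoothing_pos μ a hr x).ne'
    have log_deriv :=
      (differentiable_gaussianSmoothing μ a hr x).hasGradientAt.hasFDerivAt.log hq
    rw [← map_smul] at log_deriv
    rw [(hasGradientAt_iff_hasFDerivAt.mpr log_deriv).gradient, smul_inv_smul₀ hq]

theorem integral_inner_gradient_log_gaussianSmoothing (a b : ℝ) (hs : 0 < s) (ht : 0 < t)
    (φ : E → E)
    (hint : Integrable (fun w : E × E => ⟪∇ (fun x => log (gaussianSmoothing a s μ x)) w.1, φ w.2⟫)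
      (gaussianCoupling b t (smoothedMeasure a s μ))) :
    ∫ w : E × E, ⟪∇ (fun x => log (gaussianSmoothing a s μ x)) w.1, φ w.2⟫
        ∂gaussianCoupling b t (smoothedMeasure a s μ) =
      b * ∫ y, ⟪∇ (fun y => log (gaussianSmoothing (b * a) (t + b ^ 2 * s) μ y)) y, φ y⟫
        ∂smoothedMeasure (b * a) (t + b ^ 2 * s) μ := by
  have hr : 0 < t + b ^ 2 * s := by positivity
  calc ∫ w : E × E, ⟪∇ (fun x => log (gaussianSmoothing a s μ x)) w.1, φ w.2⟫
        ∂gaussianCoupling b t (smoothedMeasure a s μ)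
      = ∫ y, ∫ x, ⟪φ y, gaussianDensity t (y - b • x) • ∇ (gaussianSmoothing a s μ) x⟫ := by
        rw [integral_gaussianCoupling_smoothedMeasure μ a b hs ht hint]
        simp only [real_inner_comm (φ _), smul_eq_mul, ← real_inner_smul_right,
          gaussianSmoothing_smul_gradient_log μ a hs]
    _ = ∫ y, ⟪φ y, ∫ x, gaussianDensity t (y - b • x) • ∇ (gaussianSmoothing a s μ) x⟫ := by
        congr 1 with y
        exact integral_inner
          (integrable_gaussianDensity_smul_gradient_gaussianSmoothing μ a b hs ht y) (φ y)
    _ = b * ∫ y, ⟪φ y, ∇ (gaussianSmoothing (b * a) (t + b ^ 2 * s) μ) y⟫ := by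
        simp only [integral_gaussianDensity_smul_gradient_gaussianSmoothing μ a b hs ht,
          real_inner_smul_right, integral_const_mul]
    _ = b * ∫ y, ⟪∇ (fun y => log (gaussianSmoothing (b * a) (t + b ^ 2 * s) μ y)) y, φ y⟫
          ∂smoothedMeasure (b * a) (t + b ^ 2 * s) μ := by
        simp only [integral_smoothedMeasure μ (b * a) hr, smul_eq_mul, real_inner_comm (φ _),
          ← gaussianSmoothing_smul_gradient_log μ (b * a) hr, real_inner_smul_right]

end GaussianSmoothing

section OrnsteinUhlenbeck

variable {d : ℕ} {t : ℝ}

lemma stdGaussian_eq_gaussianMeasure : stdGaussian d = gaussianMeasure (Euc d) 1 := by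
  simp only [stdGaussian, gaussianMeasure, gaussianDensity, finrank_euclideanSpace_fin, mul_one]

lemma one_sub_exp_neg_two_mul_pos (ht : 0 < t) : 0 < 1 - exp (-2 * t) :=
  sub_pos.mpr (exp_lt_one_iff.mpr (by linarith))

lemma ouDensity_eq_gaussianSmoothing (p : Measure (Euc d)) (t : ℝ) :
    ouDensity d p t = gaussianSmoothing (exp (-t)) (1 - exp (-2 * t)) p := by
  ext x
  simp only [ouDensity, gaussianSmoothing, gaussianDensity, finrank_euclideanSpace_fin,
    integral_const_mul]

lemma score_eq_gradient_log_gaussianSmoothing (p : Measure (Euc d)) (t : ℝ) :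
    score d p t =
      ∇ (fun x => log (gaussianSmoothing (exp (-t)) (1 - exp (-2 * t)) p x)) := by
  rw [← ouDensity_eq_gaussianSmoothing]
  rfl

lemma ouMarginal_eq_smoothedMeasure (p : Measure (Euc d)) [IsFiniteMeasure p] (ht : 0 < t) :
    ouMarginal d p t = smoothedMeasure (exp (-t)) (1 - exp (-2 * t)) p := by
  rw [ouMarginal, stdGaussian_eq_gaussianMeasure,
    ← snd_gaussianCoupling p _ (one_sub_exp_neg_two_mul_pos ht), gaussianCoupling, Measure.snd,
    Measure.map_map measurable_snd (by fun_prop)]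
  rfl

lemma jointOU_eq_gaussianCoupling (p : Measure (Euc d)) (u v : ℝ) :
    jointOU d p u v =
      gaussianCoupling (exp (-(v - u))) (1 - exp (-2 * (v - u))) (ouMarginal d p u) := by
  rw [jointOU, stdGaussian_eq_gaussianMeasure, gaussianCoupling]

lemma exp_neg_sub_mul_exp_neg (u v : ℝ) : exp (-(v - u)) * exp (-u) = exp (-v) := by
  rw [← exp_add]
  ring_nf

lemma one_sub_exp_add_sq_exp_mul (u v : ℝ) :
    1 - exp (-2 * (v - u)) + exp (-(v - u)) ^ 2 * (1 - exp (-2 * u)) = 1 - exp (-2 * v) := by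
  rw [← exp_nat_mul, mul_sub (exp _), ← exp_add]
  ring_nf

theorem score_cross_correlation_general (d : ℕ) (p : Measure (Euc d)) [IsFiniteMeasure p]
    {u v : ℝ} (hu : 0 < u) (huv : u < v) (φ : Euc d → Euc d)
    (hint : Integrable (fun w : Euc d × Euc d => ⟪score d p u w.1, φ w.2⟫) (jointOU d p u v)) :
    ∫ w, ⟪score d p u w.1, φ w.2⟫ ∂jointOU d p u v =
      exp (-(v - u)) * ∫ y, ⟪score d p v y, φ y⟫ ∂ouMarginal d p v := by
  rw [jointOU_eq_gaussianCoupling, ouMarginal_eq_smoothedMeasure p hu,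
    score_eq_gradient_log_gaussianSmoothing] at hint ⊢
  rw [ouMarginal_eq_smoothedMeasure p (hu.trans huv), score_eq_gradient_log_gaussianSmoothing,
    ← exp_neg_sub_mul_exp_neg u v, ← one_sub_exp_add_sq_exp_mul u v]
  exact integral_inner_gradient_log_gaussianSmoothing p _ _ (one_sub_exp_neg_two_mul_pos hu)
    (one_sub_exp_neg_two_mul_pos (sub_pos.mpr huv)) φ hint

end OrnsteinUhlenbeck

/-- **Cross-correlation identity for scores along the OU process** (proved inside Lemma B.4):
for `0 < u < v`, under the joint law of `(X_u, X_v)`,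
`E ⟨∇ ln p_u(X_u), ∇ ln p_v(X_v)⟩ = e^{-(v-u)} E ‖∇ ln p_v(X_v)‖²`,
provided both expectations are finite. -/
theorem score_cross_correlation
    (d : ℕ) (hd : 1 ≤ d) (V : Euc d → ℝ) (hV : Measurable V)
    (p : Measure (Euc d)) (hprob : IsProbabilityMeasure p)
    (hp : p = ((gibbs d V) Set.univ)⁻¹ • gibbs d V)
    (hm2 : Integrable (fun x => ‖x‖ ^ 2) p)
    (u v : ℝ) (hu : 0 < u) (huv : u < v)
    (hint1 : Integrable (fun w : Euc d × Euc d =>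
        ⟪score d p u w.1, score d p v w.2⟫) (jointOU d p u v))
    (hint2 : Integrable (fun x => ‖score d p v x‖ ^ 2) (ouMarginal d p v)) :
    (∫ w, ⟪score d p u w.1, score d p v w.2⟫ ∂(jointOU d p u v)) =
      exp (-(v - u)) * ∫ x, ‖score d p v x‖ ^ 2 ∂(ouMarginal d p v) := by
  simpa only [real_inner_self_eq_norm_sq] using
    score_cross_correlation_general d p hu huv (score d p v) hint1
end
end
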